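/- Let k ≥ 2, let (X_i, σ_{X_i}), i = 1,…,k, be one-sided subshifts such that X_{i+1} is a factor of X_i with a one-block factor map π_i : X_i → X_{i+1} for i = 1,…,k−1; let π_0 be the identity on X_1, τ_i = π_i ∘ ⋯ ∘ π_0, and a = (a_1,…,a_k) with a_1 > 0 and a_i ≥ 0 for i ≥ 2. Let p ∈ ℕ, φ ∈ D_w(X_1, p), Φ the potential generated by φ, and Φ^{(2)} the potential on X_2 generated by φ^{(2)}(J) = ( Σ_{I ∈ L_n(X_1), π_1 I = J} φ(I)^{1/a_1} )^{a_1}, J ∈ L_n(X_2). Set b = (a_1 + a_2, a_3, …, a_k) ∈ ℝ^{k−1}. Then: (i) I(Φ, a) is a non-empty compact convex subset of M(X_1, σ_{X_1}) and each extreme point of I(Φ, a) is ergodic; (ii) μ ∈ I(Φ, a) if and only if μ ∈ I_{μ∘π_1^{-1}}( (1/a_1) Φ ) and μ ∘ π_1^{-1} ∈ I(Φ^{(2)}, b); (iii) I(Φ, a) is a singleton if and only if I(Φ^{(2)}, b) is a singleton {ν} and I_ν( (1/a_1) Φ ) contains a unique ergodic measure. -/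

import Mathlib

open MeasureTheory Filter Topology
open scoped Classical ENNReal NNReal

noncomputable section

/-- The left shift on one-sided sequences. -/
def shiftMap {A : Type} : (ℕ → A) → (ℕ → A) := fun x n => x (n + 1)

/-- The cylinder set of a finite word. -/
def cyl {A : Type} (I : List A) : Set (ℕ → A) :=
  {x | ∀ i : Fin I.length, x i = I.get i}

/-- Membership of a word in the language of `X`. -/
def Lang {A : Type} (X : Set (ℕ → A)) (I : List A) : Prop :=
  (cyl I ∩ X).Nonempty

/-- `X` is a (nonempty) one-sided subshift. -/
def IsSubshift {A : Type} [TopologicalSpace A] (X : Set (ℕ → A)) : Prop :=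
  X.Nonempty ∧ IsCompact X ∧ shiftMap '' X ⊆ X

/-- weak `p`-specification -/
def WeakSpecification {A : Type} (X : Set (ℕ → A)) (p : ℕ) : Prop :=
  ∀ I J : List A, Lang X I → Lang X J →
    ∃ K : List A, K.length ≤ p ∧ Lang X (I ++ K ++ J)

/-- `p`-specification -/
def Specification {A : Type} (X : Set (ℕ → A)) (p : ℕ) : Prop :=
  ∀ I J : List A, Lang X I → Lang X J →
    ∃ K : List A, K.length = p ∧ Lang X (I ++ K ++ J)

/-- invariant probability measures supported on `X` (predicate on plain measures) -/
def InvOn {A : Type} [MeasurableSpace A] (X : Set (ℕ → A)) (μ : Measure (ℕ → A)) : Prop :=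
  IsProbabilityMeasure μ ∧ μ.map shiftMap = μ ∧ μ X = 1

/-- the set of shift-invariant probability measures on `X` -/
def MInv {A : Type} [MeasurableSpace A] (X : Set (ℕ → A)) :
    Set (ProbabilityMeasure (ℕ → A)) :=
  {μ | (μ : Measure (ℕ → A)).map shiftMap = (μ : Measure (ℕ → A)) ∧
    (μ : Measure (ℕ → A)) X = 1}

/-- measure of a word: `μ([I] ∩ X)` -/
def mw {A : Type} [MeasurableSpace A] (X : Set (ℕ → A)) (μ : Measure (ℕ → A))
    (I : List A) : ℝ :=
  (μ (cyl I ∩ X)).toReal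

/-- the initial word of length `n` of a sequence -/
def wordOf {A : Type} (x : ℕ → A) (n : ℕ) : List A := List.ofFn (fun i : Fin n => x i)

/-- `n`-block entropy -/
def Hblock {A : Type} [Fintype A] [MeasurableSpace A] (X : Set (ℕ → A))
    (μ : Measure (ℕ → A)) (n : ℕ) : ℝ :=
  -∑ w : Fin n → A, mw X μ (List.ofFn w) * Real.log (mw X μ (List.ofFn w))

/-- measure-theoretic entropy (the limit exists for invariant measures; `liminf` realizes it) -/
def ent {A : Type} [Fintype A] [MeasurableSpace A] (X : Set (ℕ → A))
    (μ : Measure (ℕ → A)) : ℝ :=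
  liminf (fun n : ℕ => Hblock X μ n / n) atTop

/-- extended logarithm: `log t`, with value `⊥` for `t ≤ 0` -/
def elog (t : ℝ) : EReal := if t ≤ 0 then ⊥ else ((Real.log t : ℝ) : EReal)

/-- the integral `∫ log g dμ`, valued in `ℝ ∪ {−∞}` -/
def intlog {Ω : Type*} [MeasurableSpace Ω] (μ : Measure Ω) (g : Ω → ℝ) : EReal :=
  ((∫⁻ x, ENNReal.ofReal (Real.log (g x)) ∂μ : ℝ≥0∞) : EReal) -
    ((∫⁻ x, (if g x ≤ 0 then (⊤ : ℝ≥0∞) else ENNReal.ofReal (-Real.log (g x))) ∂μ : ℝ≥0∞) : EReal)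

/-- sub-additive potential `Φ = (log φ_n)_{n ≥ 1}` -/
def SubaddPot {A : Type} [TopologicalSpace A] (X : Set (ℕ → A))
    (φ : ℕ → (ℕ → A) → ℝ) : Prop :=
  (∀ n, 1 ≤ n → ContinuousOn (φ n) X) ∧
  (∀ n, 1 ≤ n → ∀ x ∈ X, 0 ≤ φ n x) ∧
  ∃ c > (0:ℝ), ∀ n m : ℕ, 1 ≤ n → 1 ≤ m → ∀ x ∈ X,
    φ (n + m) x ≤ c * φ n x * φ m (shiftMap^[n] x)

/-- `Φ_*(μ) = lim (1/n) ∫ log φ_n dμ` (realized as a `liminf` in `EReal`) -/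
def PhiStar {A : Type} [MeasurableSpace A] (μ : Measure (ℕ → A))
    (φ : ℕ → (ℕ → A) → ℝ) : EReal :=
  liminf (fun n : ℕ => (((n : ℝ)⁻¹ : ℝ) : EReal) * intlog μ (φ n)) atTop

/-- sub-multiplicative function on the language of `X` -/
def Submult {A : Type} (X : Set (ℕ → A)) (φ : List A → ℝ) : Prop :=
  (∀ I, Lang X I → 0 ≤ φ I) ∧ φ [] = 1 ∧
  ∃ c > (0:ℝ), ∀ I J : List A, Lang X (I ++ J) → φ (I ++ J) ≤ c⁻¹ * φ I * φ J

/-- the potential generated by a word function -/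
def genPot {A : Type} (φ : List A → ℝ) : ℕ → (ℕ → A) → ℝ := fun n x => φ (wordOf x n)

/-- the scaled potential `cΦ = (log φ_n^c)` -/
def scPot {Ω : Type*} (c : ℝ) (φ : ℕ → Ω → ℝ) : ℕ → Ω → ℝ := fun n x => φ n x ^ c

/-- the "pressure value" `Φ_*(μ) + h_μ` -/
def eqVal {A : Type} [Fintype A] [MeasurableSpace A] (X : Set (ℕ → A))
    (φ : ℕ → (ℕ → A) → ℝ) (μ : ProbabilityMeasure (ℕ → A)) : EReal :=
  PhiStar (μ : Measure (ℕ → A)) φ + ((ent X (μ : Measure (ℕ → A)) : ℝ) : EReal)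

/-- the set of equilibrium states of `Φ` -/
def EqSet {A : Type} [Fintype A] [MeasurableSpace A] (X : Set (ℕ → A))
    (φ : ℕ → (ℕ → A) → ℝ) : Set (ProbabilityMeasure (ℕ → A)) :=
  {μ | μ ∈ MInv X ∧ eqVal X φ μ = ⨆ η ∈ MInv X, eqVal X φ η}

/-- sequence map induced by a one-block map -/
def blockMap {A B : Type} (π : A → B) : (ℕ → A) → (ℕ → B) := fun x n => π (x n)

/-- pushforward of a probability measure under a one-block map -/
def pushM {A B : Type} [MeasurableSpace A] [MeasurableSpace B] (π : A → B)
    (μ : ProbabilityMeasure (ℕ → A)) : Measure (ℕ → B) :=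
  (μ : Measure (ℕ → A)).map (blockMap π)

/-- conditional equilibrium states of `Φ` over `ν` -/
def CondEqSet {A B : Type} [Fintype A] [MeasurableSpace A] [MeasurableSpace B]
    (X : Set (ℕ → A)) (π : A → B) (φ : ℕ → (ℕ → A) → ℝ) (ν : Measure (ℕ → B)) :
    Set (ProbabilityMeasure (ℕ → A)) :=
  {μ | μ ∈ MInv X ∧ pushM π μ = ν ∧
    eqVal X φ μ = ⨆ η ∈ {η | η ∈ MInv X ∧ pushM π η = ν}, eqVal X φ η}

/-- the projected word function `ψ(J) = Σ_{I : πI = J} φ(I)` -/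
def psiProj {A B : Type} [Fintype A] (X : Set (ℕ → A)) (π : A → B) (φ : List A → ℝ)
    (J : List B) : ℝ :=
  ∑ w : Fin J.length → A,
    if Lang X (List.ofFn w) ∧ List.map π (List.ofFn w) = J then φ (List.ofFn w) else 0

/-- `φ^{(2)}(J) = (Σ_{I : πI = J} φ(I)^{1/a₁})^{a₁}` -/
def phiTwo {A B : Type} [Fintype A] (X : Set (ℕ → A)) (π : A → B) (φ : List A → ℝ)
    (a₁ : ℝ) (J : List B) : ℝ :=
  (∑ w : Fin J.length → A,
    if Lang X (List.ofFn w) ∧ List.map π (List.ofFn w) = J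
    then φ (List.ofFn w) ^ a₁⁻¹ else 0) ^ a₁

/-- `a`-weighted pressure value for `k = 2` -/
def wVal2 {A B : Type} [Fintype A] [Fintype B] [MeasurableSpace A] [MeasurableSpace B]
    (X : Set (ℕ → A)) (Y : Set (ℕ → B)) (π : A → B) (φ : ℕ → (ℕ → A) → ℝ)
    (a₁ a₂ : ℝ) (μ : ProbabilityMeasure (ℕ → A)) : EReal :=
  PhiStar (μ : Measure (ℕ → A)) φ +
    ((a₁ * ent X (μ : Measure (ℕ → A)) + a₂ * ent Y (pushM π μ) : ℝ) : EReal)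

/-- the set of `a`-weighted equilibrium states, `k = 2` -/
def WEqSet2 {A B : Type} [Fintype A] [Fintype B] [MeasurableSpace A] [MeasurableSpace B]
    (X : Set (ℕ → A)) (Y : Set (ℕ → B)) (π : A → B) (φ : ℕ → (ℕ → A) → ℝ)
    (a₁ a₂ : ℝ) : Set (ProbabilityMeasure (ℕ → A)) :=
  {μ | μ ∈ MInv X ∧ wVal2 X Y π φ a₁ a₂ μ = ⨆ η ∈ MInv X, wVal2 X Y π φ a₁ a₂ η}

/-- convexity of a set of probability measures -/
def ConvexPM {Ω : Type*} [MeasurableSpace Ω] (S : Set (ProbabilityMeasure Ω)) : Prop :=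
  ∀ μ₁ ∈ S, ∀ μ₂ ∈ S, ∀ t : ℝ, 0 ≤ t → t ≤ 1 → ∀ μ : ProbabilityMeasure Ω,
    (μ : Measure Ω) = ENNReal.ofReal t • (μ₁ : Measure Ω) +
      ENNReal.ofReal (1 - t) • (μ₂ : Measure Ω) → μ ∈ S

/-- extreme points of a set of probability measures -/
def IsExtremePM {Ω : Type*} [MeasurableSpace Ω] (S : Set (ProbabilityMeasure Ω))
    (μ : ProbabilityMeasure Ω) : Prop :=
  μ ∈ S ∧ ∀ μ₁ ∈ S, ∀ μ₂ ∈ S, ∀ t : ℝ, 0 < t → t < 1 →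
    (μ : Measure Ω) = ENNReal.ofReal t • (μ₁ : Measure Ω) +
      ENNReal.ofReal (1 - t) • (μ₂ : Measure Ω) → μ₁ = μ₂

/-- the class `Ω_w(A*, p)` -/
def OmegaW {A : Type} [Fintype A] (p : ℕ) (f : List A → ℝ) : Prop :=
  (∀ I, 0 ≤ f I ∧ f I ≤ 1) ∧
  ∃ c > (0:ℝ),
    (∀ n : ℕ, ∑ w : Fin n → A, f (List.ofFn w) = 1) ∧
    (∀ I J : List A, ∃ K : List A, K.length ≤ p ∧ c * (f I * f J) ≤ f (I ++ K ++ J)) ∧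
    (∀ I : List A, ∃ i j : A, c * f I ≤ f (i :: I) ∧ c * f I ≤ f (I ++ [j]))

/-- the class `Ω(A*, p)` -/
def OmegaS {A : Type} [Fintype A] (p : ℕ) (f : List A → ℝ) : Prop :=
  (∀ I, 0 ≤ f I ∧ f I ≤ 1) ∧
  ∃ c > (0:ℝ),
    (∀ n : ℕ, ∑ w : Fin n → A, f (List.ofFn w) = 1) ∧
    (∀ I J : List A, ∃ K : List A, K.length = p ∧ c * (f I * f J) ≤ f (I ++ K ++ J))

/-- `f_{m,n}(I)` -/
def fmn {A : Type} [Fintype A] (f : List A → ℝ) (m n : ℕ) (I : List A) : ℝ :=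
  ∑ u : Fin m → A, ∑ v : Fin n → A, f (List.ofFn u ++ I ++ List.ofFn v)

/-- `f*(I) = sup_{m,n} f_{m,n}(I)` -/
def fstar {A : Type} [Fintype A] (f : List A → ℝ) (I : List A) : ℝ :=
  ⨆ m : ℕ, ⨆ n : ℕ, fmn f m n I

/-- the class `D_w(X, p)` -/
def Dw {A : Type} (X : Set (ℕ → A)) (p : ℕ) (φ : List A → ℝ) : Prop :=
  (∀ I, Lang X I → 0 ≤ φ I) ∧ (∃ I, Lang X I ∧ I ≠ [] ∧ 0 < φ I) ∧
  ∃ c : ℝ, 0 < c ∧ c ≤ 1 ∧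
    (∀ I J : List A, Lang X (I ++ J) → φ (I ++ J) ≤ c⁻¹ * φ I * φ J) ∧
    (∀ I J : List A, Lang X I → Lang X J →
      ∃ K : List A, K.length ≤ p ∧ Lang X (I ++ K ++ J) ∧
        c * (φ I * φ J) ≤ φ (I ++ K ++ J))

/-- the class `D(X, p)` -/
def Ds {A : Type} (X : Set (ℕ → A)) (p : ℕ) (φ : List A → ℝ) : Prop :=
  (∀ I, Lang X I → 0 ≤ φ I) ∧ (∃ I, Lang X I ∧ I ≠ [] ∧ 0 < φ I) ∧
  ∃ c : ℝ, 0 < c ∧ c ≤ 1 ∧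
    (∀ I J : List A, Lang X (I ++ J) → φ (I ++ J) ≤ c⁻¹ * φ I * φ J) ∧
    (∀ I J : List A, Lang X I → Lang X J →
      ∃ K : List A, K.length = p ∧ Lang X (I ++ K ++ J) ∧
        c * (φ I * φ J) ≤ φ (I ++ K ++ J))

end

noncomputable section

/-- iterated one-block maps along a chain of alphabets: `tauFrom π j i : B j → B (j+i)` -/
def tauFrom {B : ℕ → Type} (π : ∀ i, B i → B (i+1)) (j : ℕ) : (i : ℕ) → B j → B (j + i)
  | 0 => id
  | (i+1) => fun a => π (j + i) (tauFrom π j i a)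

/-- weighted pressure value along a chain starting at index `j`, with `k` weights `w 0, …, w (k-1)` -/
def wValGen {B : ℕ → Type} [∀ i, Fintype (B i)] [∀ i, MeasurableSpace (B i)]
    (π : ∀ i, B i → B (i+1)) (X : ∀ i, Set (ℕ → B i)) (j k : ℕ) (w : ℕ → ℝ)
    (φ : ℕ → (ℕ → B j) → ℝ) (μ : ProbabilityMeasure (ℕ → B j)) : EReal :=
  PhiStar (μ : Measure (ℕ → B j)) φ +
    ((∑ i ∈ Finset.range k, w i *
      ent (X (j + i)) ((μ : Measure (ℕ → B j)).map (blockMap (tauFrom π j i))) : ℝ) : EReal)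

/-- weighted equilibrium states along a chain -/
def wEqSetGen {B : ℕ → Type} [∀ i, Fintype (B i)] [∀ i, MeasurableSpace (B i)]
    (π : ∀ i, B i → B (i+1)) (X : ∀ i, Set (ℕ → B i)) (j k : ℕ) (w : ℕ → ℝ)
    (φ : ℕ → (ℕ → B j) → ℝ) : Set (ProbabilityMeasure (ℕ → B j)) :=
  {μ | μ ∈ MInv (X j) ∧
    wValGen π X j k w φ μ = ⨆ η ∈ MInv (X j), wValGen π X j k w φ η}

end

/-!
The heart of the matter is a relative variational principle: for an invariant `ν` on `X₂`, the
maximum of `Φ_*(μ) + a₁ h(μ)` over the invariant `μ` on `X₁` lying above `ν` is exactly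
`Φ^{(2)}_*(ν) + a₁ h(ν)`.  The upper bound is the Gibbs inequality applied on the set of
`n`-blocks above each block of `X₂`, followed by division by `n`.  For the lower bound, spread the
mass that `ν` gives to an `n`-block over the blocks above it in proportion to `φ^{1/a₁}`, average
along the orbit up to time `n`, and pass to a weak limit.

Because the remaining entropies in the weighted sum depend on `μ` only through its image on `X₂`,
maximizing the sum amounts to maximizing over the fibre above `ν` and then over `ν`; this is (ii).
Part (i) holds because the weighted sum is upper semicontinuous and affine: entropy and `Φ_*` are
limits of almost subadditive block averages.  For (iii), a compact convex set of measures is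
determined by its extreme points, and the extreme points of `I(Φ, a)` are ergodic.
-/

/-! ### Entropy of finite-valued random variables -/

theorem mul_log_add_negMulLog {p q : ℝ} (h : q = 0 → p = 0) :
    p * Real.log q + Real.negMulLog p = q * Real.negMulLog (p / q) := by
  rcases eq_or_ne p 0 with rfl | hp
  · simp
  · have hq : q ≠ 0 := fun hq => hp (h hq)
    rw [Real.negMulLog, Real.negMulLog, Real.log_div hp hq]
    field_simp
    ring

theorem sum_mul_log_add_negMulLog_le {ι : Type*} {s : Finset ι} {p q : ι → ℝ}
    (hp : ∀ i ∈ s, 0 ≤ p i) (hq : ∀ i ∈ s, 0 ≤ q i) (h : ∀ i ∈ s, q i = 0 → p i = 0) :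
    ∑ i ∈ s, (p i * Real.log (q i) + Real.negMulLog (p i)) ≤
      (∑ i ∈ s, p i) * Real.log (∑ i ∈ s, q i) + Real.negMulLog (∑ i ∈ s, p i) := by
  have hsum : ∑ i ∈ s, q i = 0 → ∑ i ∈ s, p i = 0 := fun h0 =>
    Finset.sum_eq_zero fun i hi => h i hi ((Finset.sum_eq_zero_iff_of_nonneg hq).1 h0 i hi)
  rw [Finset.sum_congr rfl fun i hi => mul_log_add_negMulLog (h i hi), mul_log_add_negMulLog hsum]
  rcases (Finset.sum_nonneg hq).eq_or_lt with h0 | hpos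
  · rw [← h0, zero_mul]
    refine (Finset.sum_eq_zero fun i hi => ?_).le
    rw [(Finset.sum_eq_zero_iff_of_nonneg hq).1 h0.symm i hi, zero_mul]
  · have jensen := Real.concaveOn_negMulLog.le_map_centerMass hq hpos
      (p := fun i => p i / q i) fun i hi => div_nonneg (hp i hi) (hq i hi)
    have hcancel : ∑ i ∈ s, q i * (p i / q i) = ∑ i ∈ s, p i :=
      Finset.sum_congr rfl fun i hi => mul_div_cancel_of_imp' (h i hi)
    simp only [Finset.centerMass, smul_eq_mul, hcancel] at jensen
    rwa [inv_mul_le_iff₀ hpos, inv_mul_eq_div] at jensen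

theorem sum_mul_log_add_negMulLog_proportional {ι : Type*} {s : Finset ι} {q : ι → ℝ} {P : ℝ}
    (h : ∑ i ∈ s, q i = 0 → P = 0) :
    ∑ i ∈ s, (P * (q i / ∑ j ∈ s, q j) * Real.log (q i) +
      Real.negMulLog (P * (q i / ∑ j ∈ s, q j))) =
      P * Real.log (∑ i ∈ s, q i) + Real.negMulLog P := by
  rw [mul_log_add_negMulLog h, Finset.sum_mul]
  refine Finset.sum_congr rfl fun i _ => ?_
  rw [mul_log_add_negMulLog fun hq => by rw [hq, zero_div, mul_zero]]
  rcases eq_or_ne (q i) 0 with hq | hq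
  · rw [hq, zero_mul, zero_mul]
  · rw [← mul_div_assoc, div_right_comm, mul_div_cancel_right₀ P hq]

theorem negMulLog_add_le {a b : ℝ} (ha : 0 ≤ a) (hb : 0 ≤ b) :
    Real.negMulLog (a + b) ≤ Real.negMulLog a + Real.negMulLog b := by
  rcases ha.eq_or_lt with rfl | ha
  · simp
  rcases hb.eq_or_lt with rfl | hb
  · simp
  have hla := Real.log_le_log ha (by linarith : a ≤ a + b)
  have hlb := Real.log_le_log hb (by linarith : b ≤ a + b)
  unfold Real.negMulLog
  nlinarith

/-- Shannon entropy of the random variable `f` under `μ`; of interest when `f` is measurable. -/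
noncomputable def finEntropy {Ω ι : Type*} [MeasurableSpace Ω] [Fintype ι] (μ : Measure Ω)
    (f : Ω → ι) : ℝ := ∑ i, Real.negMulLog (μ.real (f ⁻¹' {i}))

/-- `μ = t μ₁ + (1 - t) μ₂` with `t ∈ [0, 1]`. -/
structure IsMixture {Ω : Type*} [MeasurableSpace Ω] (t : ℝ) (μ₁ μ₂ μ : Measure Ω) : Prop where
  nonneg : 0 ≤ t
  le_one : t ≤ 1
  eq : μ = ENNReal.ofReal t • μ₁ + ENNReal.ofReal (1 - t) • μ₂

namespace IsMixture

variable {Ω : Type*} [MeasurableSpace Ω] {t : ℝ} {μ₁ μ₂ μ : Measure Ω}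

theorem measureReal_eq [IsFiniteMeasure μ₁] [IsFiniteMeasure μ₂] (h : IsMixture t μ₁ μ₂ μ)
    (s : Set Ω) : μ.real s = t * μ₁.real s + (1 - t) * μ₂.real s := by
  have := Measure.smul_finite μ₁ (ENNReal.ofReal_ne_top (r := t))
  have := Measure.smul_finite μ₂ (ENNReal.ofReal_ne_top (r := 1 - t))
  rw [h.eq, measureReal_add_apply, measureReal_ennreal_smul_apply, measureReal_ennreal_smul_apply,
    ENNReal.toReal_ofReal h.nonneg, ENNReal.toReal_ofReal (sub_nonneg.2 h.le_one)]

theorem map {Ω' : Type*} [MeasurableSpace Ω'] (h : IsMixture t μ₁ μ₂ μ) {f : Ω → Ω'}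
    (hf : Measurable f) : IsMixture t (μ₁.map f) (μ₂.map f) (μ.map f) where
  nonneg := h.nonneg
  le_one := h.le_one
  eq := by rw [h.eq, Measure.map_add _ _ hf, Measure.map_smul, Measure.map_smul]

end IsMixture

section
variable {Ω ι : Type*} [MeasurableSpace Ω] {f : Ω → ι}

section
variable [Countable ι]

theorem ae_comp_iff (μ : Measure Ω) [IsFiniteMeasure μ] (f : Ω → ι) (P : ι → Prop) :
    (∀ᵐ x ∂μ, P (f x)) ↔ ∀ i, ¬ P i → μ.real (f ⁻¹' {i}) = 0 := by
  have hset : {x | ¬ P (f x)} = ⋃ i ∈ {i | ¬ P i}, f ⁻¹' {i} := by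
    ext x
    simp
  rw [ae_iff, hset, measure_biUnion_null_iff (Set.to_countable _)]
  simp only [Set.mem_ofPred_eq, measureReal_eq_zero_iff (measure_ne_top μ _)]

theorem ae_fiber_pos (μ : Measure Ω) [IsFiniteMeasure μ] (f : Ω → ι) :
    ∀ᵐ x ∂μ, 0 < μ.real (f ⁻¹' {f x}) :=
  (ae_comp_iff μ f fun i => 0 < μ.real (f ⁻¹' {i})).2 fun _ h =>
    le_antisymm (not_lt.1 h) measureReal_nonneg

end

section
variable [Finite ι] [MeasurableSpace ι] [DiscreteMeasurableSpace ι]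

theorem integrable_comp_of_finite (μ : Measure Ω) [IsFiniteMeasure μ] (hf : Measurable f)
    (F : ι → ℝ) : Integrable (fun x => F (f x)) μ :=
  (integrable_map_measure Measurable.of_discrete.aestronglyMeasurable hf.aemeasurable).1 .of_finite

theorem intlog_comp (μ : Measure Ω) [IsFiniteMeasure μ] (hf : Measurable f) (F : ι → ℝ) :
    intlog μ (fun x => F (f x)) = if ∀ᵐ x ∂μ, 0 < F (f x) then
      ((∫ x, Real.log (F (f x)) ∂μ : ℝ) : EReal) else ⊥ := by
  have hint : Integrable (fun x => Real.log (F (f x))) μ :=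
    integrable_comp_of_finite μ hf fun i => Real.log (F i)
  unfold intlog
  split_ifs with h
  · have hneg : ∫⁻ x, (if F (f x) ≤ 0 then ⊤ else ENNReal.ofReal (-Real.log (F (f x)))) ∂μ =
        ∫⁻ x, ENNReal.ofReal (-Real.log (F (f x))) ∂μ := by
      refine lintegral_congr_ae ?_
      filter_upwards [h] with x hx
      rw [if_neg hx.not_ge]
    have hpos_fin : ∫⁻ x, ENNReal.ofReal (Real.log (F (f x))) ∂μ ≠ ⊤ := hint.lintegral_lt_top.ne
    have hneg_fin : ∫⁻ x, ENNReal.ofReal (-Real.log (F (f x))) ∂μ ≠ ⊤ :=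
      hint.neg.lintegral_lt_top.ne
    rw [hneg, integral_eq_lintegral_pos_part_sub_lintegral_neg_part hint, EReal.coe_sub,
      EReal.coe_ennreal_toReal hpos_fin, EReal.coe_ennreal_toReal hneg_fin]
  · have hneg : ∫⁻ x, (if F (f x) ≤ 0 then ⊤ else ENNReal.ofReal (-Real.log (F (f x)))) ∂μ = ⊤ := by
      by_contra hfin
      refine h ?_
      have hmeas := (Measurable.of_discrete (f := fun i => if F i ≤ 0 then (⊤ : ℝ≥0∞) else
        ENNReal.ofReal (-Real.log (F i)))).comp hf
      filter_upwards [ae_lt_top hmeas hfin] with x hx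
      by_contra hx'
      exact hx.ne (if_pos (not_lt.1 hx'))
    rw [hneg, EReal.coe_ennreal_top, EReal.sub_top]

end

variable [Fintype ι]

theorem finEntropy_nonneg (μ : Measure Ω) [IsProbabilityMeasure μ] (f : Ω → ι) :
    0 ≤ finEntropy μ f :=
  Finset.sum_nonneg fun _ _ => Real.negMulLog_nonneg measureReal_nonneg measureReal_le_one

theorem IsMixture.le_finEntropy {t : ℝ} {μ₁ μ₂ μ : Measure Ω} [IsFiniteMeasure μ₁]
    [IsFiniteMeasure μ₂] (h : IsMixture t μ₁ μ₂ μ) (f : Ω → ι) :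
    t * finEntropy μ₁ f + (1 - t) * finEntropy μ₂ f ≤ finEntropy μ f := by
  simp only [finEntropy, Finset.mul_sum, ← Finset.sum_add_distrib, h.measureReal_eq]
  exact Finset.sum_le_sum fun i _ => Real.concaveOn_negMulLog.2 (Set.mem_Ici.2 measureReal_nonneg)
    (Set.mem_Ici.2 measureReal_nonneg) h.nonneg (sub_nonneg.2 h.le_one) (add_sub_cancel _ _)

theorem finEntropy_equiv_comp {κ : Type*} [Fintype κ] (μ : Measure Ω) (e : ι ≃ κ) :
    finEntropy μ (fun x => e (f x)) = finEntropy μ f := by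
  refine (Fintype.sum_equiv e _ _ fun i => ?_).symm
  congr 2
  ext x
  simp

variable [MeasurableSpace ι] [DiscreteMeasurableSpace ι]

theorem integral_comp_eq_sum (μ : Measure Ω) [IsFiniteMeasure μ] (hf : Measurable f) (F : ι → ℝ) :
    ∫ x, F (f x) ∂μ = ∑ i, μ.real (f ⁻¹' {i}) * F i := by
  rw [← integral_map (φ := f) (f := F) hf.aemeasurable
    (Measurable.of_discrete.aestronglyMeasurable), integral_fintype .of_finite]
  simp_rw [map_measureReal_apply hf .of_discrete, smul_eq_mul]

theorem sum_measureReal_fiber (μ : Measure Ω) [IsProbabilityMeasure μ] (hf : Measurable f) :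
    ∑ i, μ.real (f ⁻¹' {i}) = 1 := by
  rw [sum_measureReal_preimage_singleton _ fun i _ => hf .of_discrete, Finset.coe_univ,
    Set.preimage_univ, probReal_univ]

theorem finEntropy_eq_neg_integral_log (μ : Measure Ω) [IsFiniteMeasure μ] (hf : Measurable f) :
    finEntropy μ f = -∫ x, Real.log (μ.real (f ⁻¹' {f x})) ∂μ := by
  rw [integral_comp_eq_sum μ hf fun i => Real.log (μ.real (f ⁻¹' {i}))]
  simp only [finEntropy, Real.negMulLog, neg_mul, Finset.sum_neg_distrib]

theorem finEntropy_add_integral_log_le (μ : Measure Ω) [IsProbabilityMeasure μ] (hf : Measurable f)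
    {q : ι → ℝ} (hq : ∀ i, 0 ≤ q i) (h : ∀ i, q i = 0 → μ.real (f ⁻¹' {i}) = 0) :
    finEntropy μ f + ∫ x, Real.log (q (f x)) ∂μ ≤ Real.log (∑ i, q i) := by
  have key := sum_mul_log_add_negMulLog_le (s := Finset.univ) (fun _ _ => measureReal_nonneg)
    (fun i _ => hq i) (fun i _ => h i)
  rw [Finset.sum_add_distrib, sum_measureReal_fiber μ hf, ← integral_comp_eq_sum μ hf] at key
  simpa [finEntropy, add_comm] using key

theorem finEntropy_le_log_card (μ : Measure Ω) [IsProbabilityMeasure μ] (hf : Measurable f) :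
    finEntropy μ f ≤ Real.log (Fintype.card ι) := by
  simpa using finEntropy_add_integral_log_le μ hf (q := fun _ => 1) (fun _ => zero_le_one)
    fun _ h => absurd h one_ne_zero

theorem finEntropy_prodMk_le {κ : Type*} [Fintype κ] [MeasurableSpace κ]
    [DiscreteMeasurableSpace κ] (μ : Measure Ω) [IsProbabilityMeasure μ] {g : Ω → κ}
    (hf : Measurable f) (hg : Measurable g) :
    finEntropy μ (fun x => (f x, g x)) ≤ finEntropy μ f + finEntropy μ g := by
  let q : ι × κ → ℝ := fun i => μ.real (f ⁻¹' {i.1}) * μ.real (g ⁻¹' {i.2})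
  have hnull : ∀ i, q i = 0 → μ.real ((fun x => (f x, g x)) ⁻¹' {i}) = 0 := by
    rintro ⟨i, j⟩ h
    refine le_antisymm ?_ measureReal_nonneg
    rcases mul_eq_zero.1 h with h | h <;> rw [← h] <;> refine measureReal_mono fun x hx => ?_
    · exact congrArg Prod.fst hx
    · exact congrArg Prod.snd hx
  have hq1 : ∑ i, q i = 1 := by
    simp only [q, Fintype.sum_prod_type]
    rw [← Finset.sum_mul_sum, sum_measureReal_fiber μ hf,
      sum_measureReal_fiber μ hg, one_mul]
  have hlog : ∫ x, Real.log (q (f x, g x)) ∂μ = -finEntropy μ f - finEntropy μ g := by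
    rw [finEntropy_eq_neg_integral_log μ hf, finEntropy_eq_neg_integral_log μ hg, neg_neg,
      sub_neg_eq_add, ← integral_add
        (integrable_comp_of_finite μ hf fun i => Real.log (μ.real (f ⁻¹' {i})))
        (integrable_comp_of_finite μ hg fun i => Real.log (μ.real (g ⁻¹' {i})))]
    refine integral_congr_ae ?_
    filter_upwards [ae_fiber_pos μ f, ae_fiber_pos μ g] with x hx hy
    exact Real.log_mul hx.ne' hy.ne'
  have gibbs := finEntropy_add_integral_log_le μ (hf.prodMk hg)
    (fun i => mul_nonneg measureReal_nonneg measureReal_nonneg) hnull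
  rw [hlog, hq1, Real.log_one] at gibbs
  linarith

theorem IsMixture.finEntropy_le {t : ℝ} {μ₁ μ₂ μ : Measure Ω} [IsProbabilityMeasure μ₁]
    [IsProbabilityMeasure μ₂] (h : IsMixture t μ₁ μ₂ μ) (hf : Measurable f) :
    finEntropy μ f ≤ t * finEntropy μ₁ f + (1 - t) * finEntropy μ₂ f +
      (Real.negMulLog t + Real.negMulLog (1 - t)) := by
  have hterm : ∀ i, Real.negMulLog (μ.real (f ⁻¹' {i})) ≤
      (μ₁.real (f ⁻¹' {i}) * Real.negMulLog t + t * Real.negMulLog (μ₁.real (f ⁻¹' {i}))) +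
      (μ₂.real (f ⁻¹' {i}) * Real.negMulLog (1 - t) +
        (1 - t) * Real.negMulLog (μ₂.real (f ⁻¹' {i}))) := fun i => by
    rw [h.measureReal_eq, ← Real.negMulLog_mul, ← Real.negMulLog_mul]
    exact negMulLog_add_le (mul_nonneg h.nonneg measureReal_nonneg)
      (mul_nonneg (sub_nonneg.2 h.le_one) measureReal_nonneg)
  refine (Finset.sum_le_sum fun i _ => hterm i).trans_eq ?_
  simp only [Finset.sum_add_distrib, ← Finset.sum_mul, ← Finset.mul_sum,
    sum_measureReal_fiber μ₁ hf, sum_measureReal_fiber μ₂ hf, finEntropy]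
  ring

theorem finEntropy_map {Ω' : Type*} [MeasurableSpace Ω'] (μ : Measure Ω) {g : Ω → Ω'}
    (hg : Measurable g) {f : Ω' → ι} (hf : Measurable f) :
    finEntropy (μ.map g) f = finEntropy μ (fun x => f (g x)) :=
  Finset.sum_congr rfl fun _ _ => by
    rw [map_measureReal_apply hg (hf .of_discrete), ← Set.preimage_comp, Function.comp_def]

end

/-! ### Words and block maps -/

/-- The first `n` coordinates of a sequence. Indexing words of length `n` by `Fin n → A` rather
than by lists makes them a finite type. -/
def initialWord {A : Type} (n : ℕ) (x : ℕ → A) : Fin n → A := fun i => x i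

theorem iterate_shiftMap_apply {A : Type} (i : ℕ) (x : ℕ → A) (n : ℕ) :
    (shiftMap^[i] x) n = x (n + i) := by
  induction i generalizing x with
  | zero => rfl
  | succ i ih => rw [Function.iterate_succ_apply, ih, shiftMap, add_assoc]

theorem cyl_ofFn {A : Type} {n : ℕ} (w : Fin n → A) :
    cyl (List.ofFn w) = initialWord n ⁻¹' {w} := by
  ext x
  simp [cyl, initialWord, funext_iff, Fin.forall_iff]

theorem wordOf_add {A : Type} (x : ℕ → A) (m l : ℕ) :
    wordOf x (m + l) = wordOf x m ++ wordOf (shiftMap^[m] x) l := by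
  simp [wordOf, List.ofFn_add, iterate_shiftMap_apply, add_comm]

theorem lang_wordOf {A : Type} {X : Set (ℕ → A)} {x : ℕ → A} (hx : x ∈ X) (n : ℕ) :
    Lang X (wordOf x n) :=
  ⟨x, (cyl_ofFn (initialWord n x)).ge rfl, hx⟩

theorem blockMap_iterate_shiftMap {A C : Type} (τ : A → C) (i : ℕ) (x : ℕ → A) :
    blockMap τ (shiftMap^[i] x) = shiftMap^[i] (blockMap τ x) := by
  funext n
  simp only [blockMap, iterate_shiftMap_apply]

theorem IsSubshift.iterate_shiftMap_mem {A : Type} [TopologicalSpace A] {X : Set (ℕ → A)}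
    (hX : IsSubshift X) (i : ℕ) {x : ℕ → A} (hx : x ∈ X) : shiftMap^[i] x ∈ X :=
  (Set.mapsTo_iff_image_subset.2 hX.2.2).iterate i hx

/-- `φ` is non-negative on the language of `X`, and submultiplicative up to the constant
`c⁻¹ ≥ 1`, as for every `φ ∈ D_w(X, p)`. -/
structure IsSubmultOn {A : Type} (X : Set (ℕ → A)) (φ : List A → ℝ) (c : ℝ) : Prop where
  pos : 0 < c
  le_one : c ≤ 1
  nonneg : ∀ I, Lang X I → 0 ≤ φ I
  append_le : ∀ I J : List A, Lang X (I ++ J) → φ (I ++ J) ≤ c⁻¹ * φ I * φ J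

namespace IsSubmultOn

variable {A : Type} {X : Set (ℕ → A)} {φ : List A → ℝ} {c : ℝ}

theorem log_inv_nonneg (h : IsSubmultOn X φ c) : 0 ≤ Real.log c⁻¹ :=
  Real.log_nonneg ((one_le_inv₀ h.pos).2 h.le_one)

theorem wordOf_add_le (h : IsSubmultOn X φ c) {x : ℕ → A} (hx : x ∈ X) (m l : ℕ) :
    φ (wordOf x (m + l)) ≤ c⁻¹ * φ (wordOf x m) * φ (wordOf (shiftMap^[m] x) l) := by
  have hadd := h.append_le (wordOf x m) (wordOf (shiftMap^[m] x) l)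
  rw [← wordOf_add] at hadd
  exact hadd (lang_wordOf hx _)

variable [TopologicalSpace A]

theorem pos_of_pos_add (hX : IsSubshift X) (h : IsSubmultOn X φ c) {x : ℕ → A} (hx : x ∈ X)
    {m l : ℕ} (hpos : 0 < φ (wordOf x (m + l))) :
    0 < φ (wordOf x m) ∧ 0 < φ (wordOf (shiftMap^[m] x) l) := by
  have hle := hpos.trans_le (h.wordOf_add_le hx m l)
  have hne := right_ne_zero_of_mul (left_ne_zero_of_mul hle.ne')
  have hne' := right_ne_zero_of_mul hle.ne'
  exact ⟨(h.nonneg _ (lang_wordOf hx m)).lt_of_ne' hne,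
    (h.nonneg _ (lang_wordOf (hX.iterate_shiftMap_mem m hx) l)).lt_of_ne' hne'⟩

theorem log_add_le (hX : IsSubshift X) (h : IsSubmultOn X φ c) {x : ℕ → A} (hx : x ∈ X)
    {m l : ℕ} (hpos : 0 < φ (wordOf x (m + l))) :
    Real.log (φ (wordOf x (m + l))) ≤ Real.log (φ (wordOf x m)) +
      Real.log (φ (wordOf (shiftMap^[m] x) l)) + Real.log c⁻¹ := by
  obtain ⟨hm, hl⟩ := h.pos_of_pos_add hX hx hpos
  have hc := inv_pos.2 h.pos
  have hle := Real.log_le_log hpos (h.wordOf_add_le hx m l)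
  rw [Real.log_mul (mul_pos hc hm).ne' hl.ne', Real.log_mul hc.ne' hm.ne'] at hle
  linarith

end IsSubmultOn

/-! ### Block entropy and integrals of potentials -/

theorem tendsto_coe_div_of_subadditive {u : ℕ → ℝ} (h : Subadditive u) :
    Tendsto (fun n => ((u n / n : ℝ) : EReal)) atTop
      (𝓝 (⨅ n : {n : ℕ // n ≠ 0}, ((u n / (n : ℕ) : ℝ) : EReal))) := by
  refine tendsto_order.2 ⟨fun a ha => ?_, fun a ha => ?_⟩
  · filter_upwards [eventually_ne_atTop 0] with n hn
    exact ha.trans_le (iInf_le (fun n : {n : ℕ // n ≠ 0} => ((u n / (n : ℕ) : ℝ) : EReal)) ⟨n, hn⟩)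
  · obtain ⟨⟨n, hn⟩, hlt⟩ := iInf_lt_iff.1 ha
    obtain ⟨L, hL, hLa⟩ := EReal.lt_iff_exists_real_btwn.1 hlt
    filter_upwards [h.eventually_div_lt_of_div_lt hn (EReal.coe_lt_coe_iff.1 hL)] with p hp
    exact (EReal.coe_lt_coe_iff.2 hp).trans hLa

section
variable {A : Type} [MeasurableSpace A]

theorem measurable_shiftMap : Measurable (shiftMap : (ℕ → A) → (ℕ → A)) :=
  measurable_pi_lambda _ fun n => measurable_pi_apply (n + 1)

theorem measurable_iterate_shiftMap (i : ℕ) : Measurable (shiftMap^[i] : (ℕ → A) → (ℕ → A)) :=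
  measurable_shiftMap.iterate i

theorem measurable_initialWord (n : ℕ) : Measurable (initialWord n : (ℕ → A) → (Fin n → A)) :=
  measurable_pi_lambda _ fun i => measurable_pi_apply (i : ℕ)

theorem measurable_blockMap [DiscreteMeasurableSpace A] {B : Type} [MeasurableSpace B]
    (τ : A → B) : Measurable (blockMap τ : (ℕ → A) → (ℕ → B)) :=
  measurable_pi_lambda _ fun i => Measurable.of_discrete.comp (measurable_pi_apply i)

theorem map_iterate_shiftMap {μ : Measure (ℕ → A)} (h : μ.map shiftMap = μ) (m : ℕ) :
    μ.map shiftMap^[m] = μ :=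
  ((MeasurePreserving.mk measurable_shiftMap h).iterate m).map_eq

/-- Entropy of the partition of the full shift into cylinders of length `n`. Unlike `Hblock` it
does not refer to a subshift; the two agree for measures carried by that subshift. -/
noncomputable def blockEntropy [Fintype A] (μ : Measure (ℕ → A)) (n : ℕ) : ℝ :=
  finEntropy μ (initialWord n)

theorem blockEntropy_nonneg [Fintype A] (μ : Measure (ℕ → A)) [IsProbabilityMeasure μ] (n : ℕ) :
    0 ≤ blockEntropy μ n :=
  finEntropy_nonneg μ _

/-- The integral of `log φ_n`, with the junk value `log 0 = 0` where `φ_n` vanishes; it is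
meaningful together with `AEPos φ μ n`. -/
noncomputable def logIntegral (φ : List A → ℝ)
    (μ : Measure (ℕ → A)) (n : ℕ) : ℝ :=
  ∫ x, Real.log (φ (wordOf x n)) ∂μ

/-- `φ_n` is positive almost everywhere, that is, `∫ log φ_n ∂μ > -∞`. -/
def AEPos (φ : List A → ℝ) (μ : Measure (ℕ → A)) (n : ℕ) : Prop :=
  ∀ᵐ x ∂μ, 0 < φ (wordOf x n)

theorem aePos_iff [Countable A] (φ : List A → ℝ) (μ : Measure (ℕ → A)) [IsFiniteMeasure μ] (n : ℕ) :
    AEPos φ μ n ↔ ∀ w : Fin n → A, φ (List.ofFn w) ≤ 0 → μ.real (initialWord n ⁻¹' {w}) = 0 := by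
  refine (ae_comp_iff μ (initialWord n) fun w => 0 < φ (List.ofFn w)).trans ?_
  simp only [not_lt]

end

section
variable {A : Type} [MeasurableSpace A] [DiscreteMeasurableSpace A]

section
variable [Fintype A]

theorem blockEntropy_le (μ : Measure (ℕ → A)) [IsProbabilityMeasure μ] (n : ℕ) :
    blockEntropy μ n ≤ n * Real.log (Fintype.card A) := by
  refine (finEntropy_le_log_card μ (measurable_initialWord n)).trans_eq ?_
  rw [Fintype.card_fun, Fintype.card_fin, Nat.cast_pow, Real.log_pow]

theorem blockEntropy_add_le (μ : Measure (ℕ → A)) [IsProbabilityMeasure μ] (m l : ℕ) :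
    blockEntropy μ (m + l) ≤ blockEntropy μ m + blockEntropy (μ.map shiftMap^[m]) l := by
  have hword : (fun x : ℕ → A => Fin.appendEquiv m l
      (initialWord m x, initialWord l (shiftMap^[m] x))) = initialWord (m + l) := by
    funext x i
    refine Fin.addCases (fun i => ?_) (fun i => ?_) i
    · simp [Fin.appendEquiv, initialWord]
    · simp [Fin.appendEquiv, initialWord, iterate_shiftMap_apply, add_comm]
  have hequiv := finEntropy_equiv_comp μ
    (f := fun x : ℕ → A => (initialWord m x, initialWord l (shiftMap^[m] x)))
    (Fin.appendEquiv m l)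
  rw [hword] at hequiv
  rw [blockEntropy, blockEntropy, blockEntropy, hequiv,
    finEntropy_map μ (measurable_iterate_shiftMap m) (measurable_initialWord l)]
  exact finEntropy_prodMk_le μ (measurable_initialWord m)
    ((measurable_initialWord l).comp (measurable_iterate_shiftMap (A := A) m))

theorem logIntegral_eq_sum (φ : List A → ℝ) (μ : Measure (ℕ → A)) [IsFiniteMeasure μ] (n : ℕ) :
    logIntegral φ μ n =
      ∑ w : Fin n → A, μ.real (initialWord n ⁻¹' {w}) * Real.log (φ (List.ofFn w)) :=
  integral_comp_eq_sum μ (measurable_initialWord n) fun w => Real.log (φ (List.ofFn w))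

end

section
variable [Countable A]

theorem logIntegral_map_iterate (φ : List A → ℝ) (μ : Measure (ℕ → A)) (i n : ℕ) :
    logIntegral φ (μ.map shiftMap^[i]) n = ∫ x, Real.log (φ (wordOf (shiftMap^[i] x) n)) ∂μ :=
  integral_map (measurable_iterate_shiftMap i).aemeasurable
    (Measurable.of_discrete.comp (measurable_initialWord n) : Measurable
      ((fun w => Real.log (φ (List.ofFn w))) ∘ initialWord n)).aestronglyMeasurable

theorem aePos_map_iterate (φ : List A → ℝ) (μ : Measure (ℕ → A)) (i m : ℕ) :
    AEPos φ (μ.map shiftMap^[i]) m ↔ ∀ᵐ x ∂μ, 0 < φ (wordOf (shiftMap^[i] x) m) :=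
  ae_map_iff (measurable_iterate_shiftMap i).aemeasurable
    (Measurable.of_discrete.comp (measurable_initialWord m) :
      Measurable ((fun w => 0 < φ (List.ofFn w)) ∘ initialWord m)).setOf

theorem map_initialWord_eq {μ ν : Measure (ℕ → A)} [IsFiniteMeasure μ] [IsFiniteMeasure ν] {n : ℕ}
    (h : ∀ w : Fin n → A, μ.real (initialWord n ⁻¹' {w}) = ν.real (initialWord n ⁻¹' {w})) :
    μ.map (initialWord n) = ν.map (initialWord n) :=
  Measure.ext_of_singleton fun w => by
    simpa only [Measure.map_apply (measurable_initialWord n) .of_discrete] using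
      (measureReal_eq_measureReal_iff).1 (h w)

theorem measureReal_map_iterate_eq {μ ν : Measure (ℕ → A)} [IsFiniteMeasure μ] [IsFiniteMeasure ν]
    {N i m : ℕ}
    (h : ∀ w : Fin N → A, μ.real (initialWord N ⁻¹' {w}) = ν.real (initialWord N ⁻¹' {w}))
    (hi : i + m ≤ N) (w : Fin m → A) :
    (μ.map shiftMap^[i]).real (initialWord m ⁻¹' {w}) =
      (ν.map shiftMap^[i]).real (initialWord m ⁻¹' {w}) := by
  have hpre : shiftMap^[i] ⁻¹' (initialWord m ⁻¹' {w}) =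
      initialWord N ⁻¹' {v : Fin N → A | ∀ l : Fin m, v ⟨l + i, by omega⟩ = w l} := by
    ext x
    simp only [Set.mem_preimage, Set.mem_singleton_iff, funext_iff, initialWord,
      iterate_shiftMap_apply]
    rfl
  have hmeas := measurable_initialWord (A := A) N
  rw [map_measureReal_apply (measurable_iterate_shiftMap i) (measurable_initialWord m .of_discrete),
    map_measureReal_apply (measurable_iterate_shiftMap i) (measurable_initialWord m .of_discrete),
    hpre, ← map_measureReal_apply hmeas .of_discrete, map_initialWord_eq h,
    map_measureReal_apply hmeas .of_discrete]

theorem ext_of_initialWord {μ ν : Measure (ℕ → A)} [IsProbabilityMeasure μ]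
    [IsProbabilityMeasure ν] (h : ∀ (n : ℕ) (w : Fin n → A),
      μ.real (initialWord n ⁻¹' {w}) = ν.real (initialWord n ⁻¹' {w})) : μ = ν := by
  have hpre : ∀ n (s : Set (Fin n → A)), μ (initialWord n ⁻¹' s) = ν (initialWord n ⁻¹' s) :=
    fun n s => by
      simpa only [Measure.map_apply (measurable_initialWord n) .of_discrete] using
        congrArg (· s) (map_initialWord_eq (h n))
  refine ext_of_generate_finite {t | ∃ n, ∃ s : Set (Fin n → A), t = initialWord n ⁻¹' s} ?_ ?_ ?_
    (by simp)
  · refine le_antisymm (iSup_le fun i => ?_) (MeasurableSpace.generateFrom_le ?_)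
    · rintro _ ⟨s, -, rfl⟩
      exact MeasurableSpace.measurableSet_generateFrom ⟨i + 1, {w | w (Fin.last i) ∈ s}, rfl⟩
    · rintro _ ⟨n, s, rfl⟩
      exact measurable_initialWord n .of_discrete
  · rintro _ ⟨n, s, rfl⟩ _ ⟨m, t, rfl⟩ _
    exact ⟨max n m, {w | (fun i : Fin n => w ⟨i, by omega⟩) ∈ s ∧
      (fun i : Fin m => w ⟨i, by omega⟩) ∈ t}, rfl⟩
  · rintro _ ⟨n, s, rfl⟩
    exact hpre n s

end

section
variable [Finite A]

theorem integrable_log_iterate_shiftMap (φ : List A → ℝ) (μ : Measure (ℕ → A)) [IsFiniteMeasure μ]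
    (i n : ℕ) : Integrable (fun x => Real.log (φ (wordOf (shiftMap^[i] x) n))) μ :=
  integrable_comp_of_finite μ ((measurable_initialWord n).comp (measurable_iterate_shiftMap i))
    fun w => Real.log (φ (List.ofFn w))

theorem inv_mul_intlog_genPot (φ : List A → ℝ) (μ : Measure (ℕ → A)) [IsFiniteMeasure μ] {n : ℕ}
    (hn : n ≠ 0) : (((n : ℝ)⁻¹ : ℝ) : EReal) * intlog μ (genPot φ n) =
      if AEPos φ μ n then ((logIntegral φ μ n / n : ℝ) : EReal) else ⊥ := by
  have hlog : intlog μ (genPot φ n) = if AEPos φ μ n then (logIntegral φ μ n : EReal) else ⊥ :=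
    intlog_comp μ (measurable_initialWord n) fun w => φ (List.ofFn w)
  rw [hlog]
  split_ifs
  · rw [← EReal.coe_mul, div_eq_inv_mul]
  · exact EReal.coe_mul_bot_of_pos (by positivity)

theorem PhiStar_genPot_eq_bot (φ : List A → ℝ) (μ : Measure (ℕ → A)) [IsFiniteMeasure μ]
    (h : ∃ᶠ n in atTop, ¬ AEPos φ μ n) : PhiStar μ (genPot φ) = ⊥ := by
  refine eq_bot_iff.2 (liminf_le_of_frequently_le ?_)
  refine (h.and_eventually (eventually_ne_atTop 0)).mono fun n hn => ?_
  rw [inv_mul_intlog_genPot φ μ hn.2, if_neg hn.1]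

theorem PhiStar_genPot_eq_liminf (φ : List A → ℝ) (μ : Measure (ℕ → A)) [IsFiniteMeasure μ]
    (h : ∀ᶠ n in atTop, AEPos φ μ n) : PhiStar μ (genPot φ) =
      liminf (fun n : ℕ => ((logIntegral φ μ n / n : ℝ) : EReal)) atTop := by
  refine liminf_congr ?_
  filter_upwards [h, eventually_ne_atTop 0] with n hn hn'
  rw [inv_mul_intlog_genPot φ μ hn', if_pos hn]

end

end

section
variable {A : Type} [TopologicalSpace A]

theorem continuous_shiftMap : Continuous (shiftMap : (ℕ → A) → (ℕ → A)) :=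
  continuous_pi fun i => continuous_apply (i + 1)

theorem continuous_initialWord (n : ℕ) : Continuous (initialWord n : (ℕ → A) → (Fin n → A)) :=
  continuous_pi fun i => continuous_apply (i : ℕ)

theorem continuous_blockMap [DiscreteTopology A] {B : Type} [TopologicalSpace B] (τ : A → B) :
    Continuous (blockMap τ : (ℕ → A) → (ℕ → B)) :=
  continuous_pi fun i => continuous_of_discreteTopology.comp (continuous_apply i)

end

section
variable {A : Type} [TopologicalSpace A] [DiscreteTopology A] [MeasurableSpace A]
  [BorelSpace A] {X : Set (ℕ → A)} {φ : List A → ℝ} {c : ℝ} {μ : Measure (ℕ → A)}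

section
variable [Countable A]

theorem IsSubshift.measurableSet (hX : IsSubshift X) : MeasurableSet X :=
  hX.2.1.isClosed.measurableSet

theorem IsSubshift.ae_mem (hX : IsSubshift X) [IsProbabilityMeasure μ] (h : μ X = 1) :
    ∀ᵐ x ∂μ, x ∈ X :=
  (prob_compl_eq_zero_iff hX.measurableSet).2 h

theorem AEPos.map_iterate (hX : IsSubshift X) (h : IsSubmultOn X φ c) (hμ : ∀ᵐ x ∂μ, x ∈ X)
    {N i m : ℕ} (hi : i + m ≤ N) (hpos : AEPos φ μ N) : AEPos φ (μ.map shiftMap^[i]) m := by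
  rw [aePos_map_iterate]
  obtain ⟨l, rfl⟩ := Nat.exists_eq_add_of_le hi
  filter_upwards [hμ, hpos] with x hx hx'
  rw [add_assoc] at hx'
  exact (h.pos_of_pos_add hX (hX.iterate_shiftMap_mem i hx) (h.pos_of_pos_add hX hx hx').2).1

end

section
variable [Finite A]

theorem IsSubmultOn.logIntegral_add_le (hX : IsSubshift X) (h : IsSubmultOn X φ c)
    [IsProbabilityMeasure μ] (hμ : ∀ᵐ x ∂μ, x ∈ X) {m l : ℕ} (hpos : AEPos φ μ (m + l)) :
    logIntegral φ μ (m + l) ≤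
      logIntegral φ μ m + logIntegral φ (μ.map shiftMap^[m]) l + Real.log c⁻¹ := by
  have hm : Integrable (fun x => Real.log (φ (wordOf x m))) μ :=
    integrable_log_iterate_shiftMap φ μ 0 m
  have hl := integrable_log_iterate_shiftMap φ μ m l
  have hml : Integrable (fun x => Real.log (φ (wordOf x m)) +
      Real.log (φ (wordOf (shiftMap^[m] x) l))) μ := hm.add hl
  calc logIntegral φ μ (m + l)
      ≤ ∫ x, (Real.log (φ (wordOf x m)) + Real.log (φ (wordOf (shiftMap^[m] x) l)) +
          Real.log c⁻¹) ∂μ := by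
        refine integral_mono_ae (integrable_log_iterate_shiftMap φ μ 0 _)
          (hml.add (integrable_const _)) ?_
        filter_upwards [hμ, hpos] with x hx hx'
        exact h.log_add_le hX hx hx'
    _ = _ := by
        rw [integral_add hml (integrable_const _), integral_add hm hl, integral_const,
          probReal_univ, one_smul, logIntegral_map_iterate, logIntegral]

theorem continuous_measureReal_initialWord {n : ℕ} (w : Fin n → A) :
    Continuous fun μ : ProbabilityMeasure (ℕ → A) =>
      (μ : Measure (ℕ → A)).real (initialWord n ⁻¹' {w}) := by
  refine continuous_iff_continuousAt.2 fun μ => ?_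
  have hclopen : IsClopen (initialWord n ⁻¹' {w}) :=
    (isClopen_discrete {w}).preimage (continuous_initialWord n)
  exact NNReal.tendsto_coe.2 (ProbabilityMeasure.tendsto_measure_of_null_frontier_of_tendsto
    tendsto_id (by simp [hclopen.frontier_eq]))

theorem continuous_logIntegral (φ : List A → ℝ) (n : ℕ) :
    Continuous fun μ : ProbabilityMeasure (ℕ → A) => logIntegral φ (μ : Measure (ℕ → A)) n := by
  cases nonempty_fintype A
  simp_rw [logIntegral_eq_sum]
  exact continuous_finsetSum _ fun w _ =>
    (continuous_measureReal_initialWord w).mul continuous_const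

end

section
variable [Fintype A]

theorem IsSubshift.Hblock_eq (hX : IsSubshift X) [IsProbabilityMeasure μ] (h : μ X = 1) (n : ℕ) :
    Hblock X μ n = blockEntropy μ n := by
  have hword : ∀ w : Fin n → A, mw X μ (List.ofFn w) = μ.real (initialWord n ⁻¹' {w}) :=
    fun w => by
      rw [mw, cyl_ofFn, Measure.real,
        measure_inter_conull ((prob_compl_eq_zero_iff hX.measurableSet).2 h)]
  simp only [Hblock, blockEntropy, finEntropy, hword, Real.negMulLog, neg_mul,
    Finset.sum_neg_distrib]

theorem IsSubshift.tendsto_ent (hX : IsSubshift X) [IsProbabilityMeasure μ] (h : μ X = 1)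
    (hinv : μ.map shiftMap = μ) :
    Tendsto (fun n : ℕ => blockEntropy μ n / n) atTop (𝓝 (ent X μ)) := by
  have hsub : Subadditive (blockEntropy μ) := fun m l => by
    simpa only [map_iterate_shiftMap hinv] using blockEntropy_add_le μ m l
  have hbdd : BddBelow (Set.range fun n : ℕ => blockEntropy μ n / n) := by
    refine ⟨0, ?_⟩
    rintro _ ⟨n, rfl⟩
    exact div_nonneg (blockEntropy_nonneg μ n) (Nat.cast_nonneg n)
  have hlim := hsub.tendsto_lim hbdd
  have hent : ent X μ = hsub.lim := by
    simp only [ent, hX.Hblock_eq h]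
    exact hlim.liminf_eq
  rwa [hent]

theorem continuous_blockEntropy (n : ℕ) :
    Continuous fun μ : ProbabilityMeasure (ℕ → A) => blockEntropy (μ : Measure (ℕ → A)) n :=
  continuous_finsetSum _ fun w _ =>
    Real.continuous_negMulLog.comp (continuous_measureReal_initialWord w)

end

end

/-! ### Weighted pressure along a family of factor maps -/

theorem tendsto_coe_add_coe {α : Type*} {l : Filter α} {u v : α → ℝ} {y : EReal} {z : ℝ}
    (hu : Tendsto (fun n => (u n : EReal)) l (𝓝 y)) (hv : Tendsto v l (𝓝 z)) :
    Tendsto (fun n => ((u n + v n : ℝ) : EReal)) l (𝓝 (y + z)) := by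
  have hadd := EReal.continuousAt_add (p := (y, (z : EReal))) (by simp) (by simp)
  simp only [EReal.coe_add]
  exact hadd.tendsto.comp (hu.prodMk_nhds (EReal.tendsto_coe.2 hv))

section
variable {A C : Type} [MeasurableSpace A] [MeasurableSpace C]

instance isProbabilityMeasure_map_iterate_shiftMap (μ : Measure (ℕ → A)) [IsProbabilityMeasure μ]
    (i : ℕ) : IsProbabilityMeasure (μ.map shiftMap^[i]) :=
  Measure.isProbabilityMeasure_map (measurable_iterate_shiftMap i).aemeasurable

variable [DiscreteMeasurableSpace A]

instance isProbabilityMeasure_map_blockMap (μ : Measure (ℕ → A)) [IsProbabilityMeasure μ]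
    (τ : A → C) : IsProbabilityMeasure (μ.map (blockMap τ)) :=
  Measure.isProbabilityMeasure_map (measurable_blockMap τ).aemeasurable

/-- `pushM` with values in probability measures. -/
noncomputable def pushPM (τ : A → C) (μ : ProbabilityMeasure (ℕ → A)) :
    ProbabilityMeasure (ℕ → C) :=
  μ.map (measurable_blockMap τ).aemeasurable

theorem map_blockMap_map_iterate (μ : Measure (ℕ → A)) (τ : A → C) (m : ℕ) :
    (μ.map (blockMap τ)).map shiftMap^[m] = (μ.map shiftMap^[m]).map (blockMap τ) := by
  rw [Measure.map_map (measurable_iterate_shiftMap m) (measurable_blockMap τ),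
    Measure.map_map (measurable_blockMap τ) (measurable_iterate_shiftMap m)]
  congr 1
  funext x
  exact (blockMap_iterate_shiftMap τ m x).symm

theorem pushPM_mem_MInv {τ : A → C} {μ : ProbabilityMeasure (ℕ → A)} {X : Set (ℕ → A)}
    {Y : Set (ℕ → C)} (hμ : μ ∈ MInv X) (hY : MeasurableSet Y)
    (hτ : Set.MapsTo (blockMap τ) X Y) : pushPM τ μ ∈ MInv Y := by
  refine ⟨(map_blockMap_map_iterate _ τ 1).trans (congrArg (Measure.map _) hμ.1), ?_⟩
  refine le_antisymm prob_le_one ?_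
  rw [← hμ.2]
  exact (measure_mono hτ).trans_eq (Measure.map_apply (measurable_blockMap τ) hY).symm

end

theorem continuous_pushPM {A C : Type} [Finite A] [TopologicalSpace A] [DiscreteTopology A]
    [MeasurableSpace A] [BorelSpace A] [Finite C] [TopologicalSpace C] [MeasurableSpace C]
    [BorelSpace C] (τ : A → C) :
    Continuous (pushPM τ) :=
  ProbabilityMeasure.continuous_map (continuous_blockMap τ)

section
variable {ι A : Type} {C : ι → Type} [MeasurableSpace A] [∀ i, Fintype (C i)]
  [∀ i, MeasurableSpace (C i)]

/-- `Φ_*(μ) + ∑ᵢ wᵢ h(τᵢ μ)` for a finite family of factor maps `τᵢ`. Both `wValGen` and `eqVal`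
are of this form. -/
noncomputable def weightedPressure (τ : ∀ i, A → C i) (Y : ∀ i, Set (ℕ → C i)) (s : Finset ι)
    (w : ι → ℝ) (φ : ℕ → (ℕ → A) → ℝ) (μ : ProbabilityMeasure (ℕ → A)) : EReal :=
  PhiStar (μ : Measure (ℕ → A)) φ +
    ((∑ i ∈ s, w i * ent (Y i) ((μ : Measure (ℕ → A)).map (blockMap (τ i))) : ℝ) : EReal)

/-- The stage-`n` counterpart `∑ᵢ wᵢ H_n(τᵢ μ)` of the weighted entropy. -/
noncomputable def weightedBlockEntropy (τ : ∀ i, A → C i) (s : Finset ι) (w : ι → ℝ)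
    (μ : Measure (ℕ → A)) (n : ℕ) : ℝ :=
  ∑ i ∈ s, w i * blockEntropy (μ.map (blockMap (τ i))) n

/-- The stage-`n` counterpart of `weightedPressure`. The term `log c⁻¹` makes it subadditive
in `n`. -/
noncomputable def blockPressure (τ : ∀ i, A → C i) (s : Finset ι) (w : ι → ℝ) (φ : List A → ℝ)
    (c : ℝ) (μ : Measure (ℕ → A)) (n : ℕ) : ℝ :=
  logIntegral φ μ n + Real.log c⁻¹ + weightedBlockEntropy τ s w μ n

/-- `τᵢ : X → Yᵢ` are block maps between subshifts and the weights `wᵢ` are non-negative. -/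
structure IsWeightedFamily [TopologicalSpace A] [∀ i, TopologicalSpace (C i)] (X : Set (ℕ → A))
    (τ : ∀ i, A → C i) (Y : ∀ i, Set (ℕ → C i)) (s : Finset ι) (w : ι → ℝ) : Prop where
  source : IsSubshift X
  target : ∀ i ∈ s, IsSubshift (Y i)
  mapsTo : ∀ i ∈ s, Set.MapsTo (blockMap (τ i)) X (Y i)
  weight_nonneg : ∀ i ∈ s, 0 ≤ w i

variable [DiscreteMeasurableSpace A] {τ : ∀ i, A → C i} {s : Finset ι} {w : ι → ℝ}

theorem weightedBlockEntropy_add_le [∀ i, DiscreteMeasurableSpace (C i)] (hw : ∀ i ∈ s, 0 ≤ w i)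
    (μ : Measure (ℕ → A)) [IsProbabilityMeasure μ] (m l : ℕ) :
    weightedBlockEntropy τ s w μ (m + l) ≤
      weightedBlockEntropy τ s w μ m + weightedBlockEntropy τ s w (μ.map shiftMap^[m]) l := by
  simp only [weightedBlockEntropy, ← Finset.sum_add_distrib, ← mul_add,
    ← map_blockMap_map_iterate]
  exact Finset.sum_le_sum fun i hi =>
    mul_le_mul_of_nonneg_left (blockEntropy_add_le _ m l) (hw i hi)

theorem IsMixture.le_weightedBlockEntropy (hw : ∀ i ∈ s, 0 ≤ w i) {t : ℝ}
    {μ₁ μ₂ μ : Measure (ℕ → A)} [IsProbabilityMeasure μ₁] [IsProbabilityMeasure μ₂]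
    (h : IsMixture t μ₁ μ₂ μ) (n : ℕ) :
    t * weightedBlockEntropy τ s w μ₁ n + (1 - t) * weightedBlockEntropy τ s w μ₂ n ≤
      weightedBlockEntropy τ s w μ n := by
  simp only [weightedBlockEntropy, Finset.mul_sum, ← Finset.sum_add_distrib]
  refine Finset.sum_le_sum fun i hi => ?_
  have hmul := mul_le_mul_of_nonneg_left ((h.map (measurable_blockMap (τ i))).le_finEntropy
    (initialWord n)) (hw i hi)
  unfold blockEntropy
  linarith

theorem IsMixture.weightedBlockEntropy_le [∀ i, DiscreteMeasurableSpace (C i)]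
    (hw : ∀ i ∈ s, 0 ≤ w i) {t : ℝ} {μ₁ μ₂ μ : Measure (ℕ → A)}
    [IsProbabilityMeasure μ₁] [IsProbabilityMeasure μ₂] (h : IsMixture t μ₁ μ₂ μ) (n : ℕ) :
    weightedBlockEntropy τ s w μ n ≤
      t * weightedBlockEntropy τ s w μ₁ n + (1 - t) * weightedBlockEntropy τ s w μ₂ n +
      (∑ i ∈ s, w i) * (Real.negMulLog t + Real.negMulLog (1 - t)) := by
  simp only [weightedBlockEntropy, Finset.mul_sum, Finset.sum_mul, ← Finset.sum_add_distrib]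
  refine Finset.sum_le_sum fun i hi => ?_
  have hmul := mul_le_mul_of_nonneg_left ((h.map (measurable_blockMap (τ i))).finEntropy_le
    (measurable_initialWord n)) (hw i hi)
  unfold blockEntropy
  linarith

theorem IsMixture.logIntegral_eq [Finite A] (φ : List A → ℝ) {t : ℝ} {μ₁ μ₂ μ : Measure (ℕ → A)}
    [IsFiniteMeasure μ] [IsFiniteMeasure μ₁] [IsFiniteMeasure μ₂] (h : IsMixture t μ₁ μ₂ μ)
    (n : ℕ) : logIntegral φ μ n = t * logIntegral φ μ₁ n + (1 - t) * logIntegral φ μ₂ n := by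
  cases nonempty_fintype A
  simp only [logIntegral_eq_sum, Finset.mul_sum, ← Finset.sum_add_distrib, h.measureReal_eq]
  exact Finset.sum_congr rfl fun _ _ => by ring

end

section
variable {A : Type} [Finite A] [TopologicalSpace A] [DiscreteTopology A] [MeasurableSpace A]
  [BorelSpace A] {X : Set (ℕ → A)} {φ : List A → ℝ} {c : ℝ} {μ : ProbabilityMeasure (ℕ → A)}

theorem AEPos.mono (hX : IsSubshift X) (h : IsSubmultOn X φ c) {μ : Measure (ℕ → A)}
    (hμ : ∀ᵐ x ∂μ, x ∈ X) {N m : ℕ} (hmN : m ≤ N) (hpos : AEPos φ μ N) : AEPos φ μ m := by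
  simpa using hpos.map_iterate hX h hμ (i := 0) (m := m) (by omega)

theorem PhiStar_eq_bot_of_not_aePos (hX : IsSubshift X) (h : IsSubmultOn X φ c) (hμ : μ ∈ MInv X)
    (hpos : ¬ ∀ n, AEPos φ (μ : Measure (ℕ → A)) n) :
    PhiStar (μ : Measure (ℕ → A)) (genPot φ) = ⊥ := by
  obtain ⟨n, hn⟩ := not_forall.1 hpos
  refine PhiStar_genPot_eq_bot φ _ (Eventually.frequently ?_)
  filter_upwards [eventually_ge_atTop n] with N hN hposN
  exact hn (hposN.mono hX h (hX.ae_mem hμ.2) hN)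

theorem weightedPressure_eq_bot {ι : Type} {C : ι → Type} [∀ i, Fintype (C i)]
    [∀ i, MeasurableSpace (C i)] {τ : ∀ i, A → C i} {Y : ∀ i, Set (ℕ → C i)} {s : Finset ι}
    {w : ι → ℝ} (hX : IsSubshift X) (hφ : IsSubmultOn X φ c) (hμ : μ ∈ MInv X)
    (hpos : ¬ ∀ n, AEPos φ (μ : Measure (ℕ → A)) n) :
    weightedPressure τ Y s w (genPot φ) μ = ⊥ := by
  rw [weightedPressure, PhiStar_eq_bot_of_not_aePos hX hφ hμ hpos, EReal.bot_add]

theorem IsSubmultOn.subadditive_logIntegral (hX : IsSubshift X) (h : IsSubmultOn X φ c)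
    (hμ : μ ∈ MInv X) (hpos : ∀ n, AEPos φ (μ : Measure (ℕ → A)) n) :
    Subadditive fun n => logIntegral φ (μ : Measure (ℕ → A)) n + Real.log c⁻¹ := fun m l => by
  have hadd := h.logIntegral_add_le hX (hX.ae_mem hμ.2) (hpos (m + l))
  rw [map_iterate_shiftMap hμ.1] at hadd
  linarith

theorem tendsto_logIntegral_div (hX : IsSubshift X) (h : IsSubmultOn X φ c) (hμ : μ ∈ MInv X)
    (hpos : ∀ n, AEPos φ (μ : Measure (ℕ → A)) n) :
    Tendsto (fun n : ℕ => ((logIntegral φ (μ : Measure (ℕ → A)) n / n : ℝ) : EReal)) atTop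
      (𝓝 (PhiStar (μ : Measure (ℕ → A)) (genPot φ))) := by
  have hlim := tendsto_coe_add_coe
    (tendsto_coe_div_of_subadditive (h.subadditive_logIntegral hX hμ hpos))
    (tendsto_const_div_atTop_nhds_zero_nat (-Real.log c⁻¹))
  simp only [← add_div, add_neg_cancel_right] at hlim
  rw [PhiStar_genPot_eq_liminf _ _ (Eventually.of_forall hpos), hlim.liminf_eq]
  exact hlim

end

section
variable {ι A : Type} [Finite A] [TopologicalSpace A] [DiscreteTopology A] [MeasurableSpace A]
  [BorelSpace A] {C : ι → Type} [∀ i, Fintype (C i)] [∀ i, TopologicalSpace (C i)]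
  [∀ i, DiscreteTopology (C i)] [∀ i, MeasurableSpace (C i)] [∀ i, BorelSpace (C i)]
  {X : Set (ℕ → A)} {τ : ∀ i, A → C i} {Y : ∀ i, Set (ℕ → C i)} {s : Finset ι} {w : ι → ℝ}
  {φ : List A → ℝ} {c : ℝ} {μ : ProbabilityMeasure (ℕ → A)}

theorem continuous_weightedBlockEntropy (n : ℕ) : Continuous
    fun μ : ProbabilityMeasure (ℕ → A) => weightedBlockEntropy τ s w (μ : Measure (ℕ → A)) n :=
  continuous_finsetSum _ fun i _ => continuous_const.mul
    ((continuous_blockEntropy n).comp (continuous_pushPM (τ i)))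

theorem continuous_blockPressure (φ : List A → ℝ) (c : ℝ) (n : ℕ) : Continuous
    fun μ : ProbabilityMeasure (ℕ → A) => blockPressure τ s w φ c (μ : Measure (ℕ → A)) n :=
  ((continuous_logIntegral φ n).add continuous_const).add (continuous_weightedBlockEntropy n)

namespace IsWeightedFamily

theorem tendsto_weightedBlockEntropy_div (h : IsWeightedFamily X τ Y s w) (hμ : μ ∈ MInv X) :
    Tendsto (fun n : ℕ => weightedBlockEntropy τ s w (μ : Measure (ℕ → A)) n / n) atTop
      (𝓝 (∑ i ∈ s, w i * ent (Y i) ((μ : Measure (ℕ → A)).map (blockMap (τ i))))) := by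
  simp only [weightedBlockEntropy, Finset.sum_div, mul_div_assoc]
  refine tendsto_finsetSum _ fun i hi => ?_
  have hpush := pushPM_mem_MInv hμ (h.target i hi).measurableSet (h.mapsTo i hi)
  exact ((h.target i hi).tendsto_ent hpush.2 hpush.1).const_mul _

theorem tendsto_blockPressure_div (h : IsWeightedFamily X τ Y s w) (hφ : IsSubmultOn X φ c)
    (hμ : μ ∈ MInv X) (hpos : ∀ n, AEPos φ (μ : Measure (ℕ → A)) n) :
    Tendsto (fun n : ℕ => ((blockPressure τ s w φ c (μ : Measure (ℕ → A)) n / n : ℝ) : EReal))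
      atTop (𝓝 (weightedPressure τ Y s w (genPot φ) μ)) := by
  have hconst := (tendsto_const_div_atTop_nhds_zero_nat (Real.log c⁻¹)).add
    (h.tendsto_weightedBlockEntropy_div hμ)
  rw [zero_add] at hconst
  refine (tendsto_coe_add_coe (tendsto_logIntegral_div h.source hφ hμ hpos) hconst).congr
    fun n => ?_
  rw [blockPressure, add_div, add_div, add_assoc]

theorem subadditive_blockPressure (h : IsWeightedFamily X τ Y s w) (hφ : IsSubmultOn X φ c)
    (hμ : μ ∈ MInv X) (hpos : ∀ n, AEPos φ (μ : Measure (ℕ → A)) n) :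
    Subadditive (blockPressure τ s w φ c (μ : Measure (ℕ → A))) := fun m l => by
  have hlog := hφ.subadditive_logIntegral h.source hμ hpos m l
  have hent := weightedBlockEntropy_add_le (τ := τ) h.weight_nonneg (μ : Measure (ℕ → A)) m l
  rw [map_iterate_shiftMap hμ.1] at hent
  unfold blockPressure
  linarith

theorem weightedPressure_eq_iInf (h : IsWeightedFamily X τ Y s w) (hφ : IsSubmultOn X φ c)
    (hμ : μ ∈ MInv X) (hpos : ∀ n, AEPos φ (μ : Measure (ℕ → A)) n) :
    weightedPressure τ Y s w (genPot φ) μ = ⨅ n : {n : ℕ // n ≠ 0},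
      ((blockPressure τ s w φ c (μ : Measure (ℕ → A)) n / (n : ℕ) : ℝ) : EReal) :=
  tendsto_nhds_unique (h.tendsto_blockPressure_div hφ hμ hpos)
    (tendsto_coe_div_of_subadditive (h.subadditive_blockPressure hφ hμ hpos))

theorem coe_le_weightedPressure_iff (h : IsWeightedFamily X τ Y s w) (hφ : IsSubmultOn X φ c)
    (hμ : μ ∈ MInv X) (r : ℝ) : (r : EReal) ≤ weightedPressure τ Y s w (genPot φ) μ ↔
      (∀ n, AEPos φ (μ : Measure (ℕ → A)) n) ∧
      ∀ n : ℕ, n ≠ 0 → n * r ≤ blockPressure τ s w φ c (μ : Measure (ℕ → A)) n := by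
  by_cases hpos : ∀ n, AEPos φ (μ : Measure (ℕ → A)) n
  · simp only [h.weightedPressure_eq_iInf hφ hμ hpos, le_iInf_iff, EReal.coe_le_coe_iff,
      Subtype.forall, hpos, implies_true, true_and]
    refine forall₂_congr fun n hn => ?_
    rw [le_div_iff₀ (Nat.cast_pos.2 (Nat.pos_of_ne_zero hn)), mul_comm]
  · simp [weightedPressure_eq_bot h.source hφ hμ hpos, hpos]

theorem weightedPressure_lt_top (h : IsWeightedFamily X τ Y s w) (hφ : IsSubmultOn X φ c)
    (hμ : μ ∈ MInv X) : weightedPressure τ Y s w (genPot φ) μ < ⊤ := by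
  by_cases hpos : ∀ n, AEPos φ (μ : Measure (ℕ → A)) n
  · rw [h.weightedPressure_eq_iInf hφ hμ hpos]
    exact (iInf_le _ ⟨1, one_ne_zero⟩).trans_lt (EReal.coe_lt_top _)
  · rw [weightedPressure_eq_bot h.source hφ hμ hpos]
    exact bot_lt_top

end IsWeightedFamily

end

/-! ### Orbit averages and invariant measures -/

section
variable {A : Type} [MeasurableSpace A]

/-- The average of `η` along its first `n + 1` images under the shift. -/
noncomputable def orbitAverage (η : ProbabilityMeasure (ℕ → A)) (n : ℕ) :
    ProbabilityMeasure (ℕ → A) :=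
  ⟨((n + 1 : ℕ) : ℝ≥0∞)⁻¹ • ∑ i ∈ Finset.range (n + 1), (η : Measure (ℕ → A)).map shiftMap^[i],
    ⟨by simp [ENNReal.inv_mul_cancel]⟩⟩

theorem measureReal_orbitAverage (η : ProbabilityMeasure (ℕ → A)) (n : ℕ) (E : Set (ℕ → A)) :
    (orbitAverage η n : Measure (ℕ → A)).real E = ((n : ℝ) + 1)⁻¹ *
      ∑ i ∈ Finset.range (n + 1), ((η : Measure (ℕ → A)).map shiftMap^[i]).real E := by
  simp only [orbitAverage, ProbabilityMeasure.coe_mk, measureReal_def, Measure.coe_smul,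
    Pi.smul_apply, smul_eq_mul, Measure.coe_finsetSum, Finset.sum_apply, ENNReal.toReal_mul,
    ENNReal.toReal_inv, ENNReal.toReal_natCast]
  rw [ENNReal.toReal_sum fun i _ => measure_ne_top _ _, Nat.cast_succ]

theorem measureReal_map_orbitAverage_sub (η : ProbabilityMeasure (ℕ → A)) (n : ℕ)
    {E : Set (ℕ → A)} (hE : MeasurableSet E) :
    ((orbitAverage η n : Measure (ℕ → A)).map shiftMap).real E -
        (orbitAverage η n : Measure (ℕ → A)).real E = ((n : ℝ) + 1)⁻¹ *
      (((η : Measure (ℕ → A)).map shiftMap^[n + 1]).real E -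
        ((η : Measure (ℕ → A)).map shiftMap^[0]).real E) := by
  rw [map_measureReal_apply measurable_shiftMap hE, measureReal_orbitAverage,
    measureReal_orbitAverage, ← mul_sub, ← Finset.sum_sub_distrib,
    ← Finset.sum_range_sub fun i => ((η : Measure (ℕ → A)).map shiftMap^[i]).real E]
  refine congrArg _ (Finset.sum_congr rfl fun i _ => ?_)
  rw [map_measureReal_apply (measurable_iterate_shiftMap i) (measurable_shiftMap hE),
    map_measureReal_apply (measurable_iterate_shiftMap (i + 1)) hE, ← Set.preimage_comp,
    Function.iterate_succ' shiftMap i]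

theorem tendsto_map_orbitAverage_sub (η : ℕ → ProbabilityMeasure (ℕ → A)) {E : Set (ℕ → A)}
    (hE : MeasurableSet E) :
    Tendsto (fun n => ((orbitAverage (η n) n : Measure (ℕ → A)).map shiftMap).real E -
      (orbitAverage (η n) n : Measure (ℕ → A)).real E) atTop (𝓝 0) := by
  refine squeeze_zero_norm (fun n => ?_) (tendsto_one_div_add_atTop_nhds_zero_nat (𝕜 := ℝ))
  rw [measureReal_map_orbitAverage_sub _ _ hE, norm_mul, Real.norm_of_nonneg (by positivity),
    one_div]
  exact mul_le_of_le_one_right (by positivity) (abs_sub_le_of_nonneg_of_le measureReal_nonneg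
    measureReal_le_one measureReal_nonneg measureReal_le_one)

theorem sum_blockEntropy_le [Fintype A] (η : ProbabilityMeasure (ℕ → A)) (n m : ℕ) :
    ∑ i ∈ Finset.range (n + 1), blockEntropy ((η : Measure (ℕ → A)).map shiftMap^[i]) m ≤
      ((n : ℝ) + 1) * blockEntropy (orbitAverage η n : Measure (ℕ → A)) m := by
  unfold blockEntropy finEntropy
  rw [Finset.sum_comm, Finset.mul_sum]
  refine Finset.sum_le_sum fun w _ => ?_
  have hjensen := Real.concaveOn_negMulLog.le_map_sum (t := Finset.range (n + 1))
    (w := fun _ => ((n : ℝ) + 1)⁻¹)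
    (p := fun i => ((η : Measure (ℕ → A)).map shiftMap^[i]).real (initialWord m ⁻¹' {w}))
    (fun _ _ => by positivity) (by simp; field_simp) (fun _ _ => measureReal_nonneg)
  simp only [smul_eq_mul, ← Finset.mul_sum] at hjensen
  rw [measureReal_orbitAverage]
  exact (inv_mul_le_iff₀ (by positivity)).1 hjensen

theorem sum_logIntegral_eq [Finite A] [DiscreteMeasurableSpace A] (φ : List A → ℝ)
    (η : ProbabilityMeasure (ℕ → A)) (n m : ℕ) :
    ∑ i ∈ Finset.range (n + 1), logIntegral φ ((η : Measure (ℕ → A)).map shiftMap^[i]) m =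
      ((n : ℝ) + 1) * logIntegral φ (orbitAverage η n : Measure (ℕ → A)) m := by
  cases nonempty_fintype A
  simp_rw [logIntegral_eq_sum, measureReal_orbitAverage]
  rw [Finset.sum_comm, Finset.mul_sum]
  refine Finset.sum_congr rfl fun w _ => ?_
  rw [← Finset.sum_mul]
  field_simp

end

section
variable {A : Type} [Finite A] [TopologicalSpace A] [DiscreteTopology A] [MeasurableSpace A]
  [BorelSpace A] {X : Set (ℕ → A)}

theorem orbitAverage_apply_eq_one (hX : IsSubshift X) {η : ProbabilityMeasure (ℕ → A)}
    (hη : (η : Measure (ℕ → A)) X = 1) (n : ℕ) : (orbitAverage η n : Measure (ℕ → A)) X = 1 := by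
  have hmap (i : ℕ) : ((η : Measure (ℕ → A)).map shiftMap^[i]) X = 1 := by
    rw [Measure.map_apply (measurable_iterate_shiftMap i) hX.measurableSet]
    exact prob_le_one.antisymm
      (hη.symm.trans_le (measure_mono fun x hx => hX.iterate_shiftMap_mem i hx))
  simp [orbitAverage, hmap, ENNReal.inv_mul_cancel]

theorem isClosed_setOf_apply_eq_one (hX : IsClosed X) :
    IsClosed {μ : ProbabilityMeasure (ℕ → A) | (μ : Measure (ℕ → A)) X = 1} := by
  refine isClosed_iff_ultrafilter.2 fun μ U hU hmem => ?_
  have hlim := ProbabilityMeasure.limsup_measure_closed_le_of_tendsto (tendsto_id'.2 hU) hX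
  have hone : limsup (fun η : ProbabilityMeasure (ℕ → A) => (η : Measure (ℕ → A)) X) U = 1 :=
    (limsup_congr (v := fun _ => 1) hmem).trans (limsup_const 1)
  exact prob_le_one.antisymm (hone.ge.trans hlim)

theorem isCompact_MInv (hX : IsSubshift X) : IsCompact (MInv X) := by
  have hinv : IsClosed {μ : ProbabilityMeasure (ℕ → A) |
      (μ : Measure (ℕ → A)).map shiftMap = (μ : Measure (ℕ → A))} := by
    convert isClosed_eq (ProbabilityMeasure.continuous_map (continuous_shiftMap (A := A)))
      continuous_id using 1
    ext μ
    exact ⟨fun h => Subtype.ext h, fun h => congrArg Subtype.val h⟩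
  exact (hinv.inter (isClosed_setOf_apply_eq_one hX.2.1.isClosed)).isCompact

theorem map_shiftMap_eq_of_tendsto_orbitAverage {η : ℕ → ProbabilityMeasure (ℕ → A)}
    {U : Filter ℕ} [U.NeBot] (hU : U ≤ atTop) {μ : ProbabilityMeasure (ℕ → A)}
    (hlim : Tendsto (fun n => orbitAverage (η n) n) U (𝓝 μ)) :
    (μ : Measure (ℕ → A)).map shiftMap = (μ : Measure (ℕ → A)) := by
  have : IsProbabilityMeasure ((μ : Measure (ℕ → A)).map shiftMap) :=
    isProbabilityMeasure_map_iterate_shiftMap _ 1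
  refine ext_of_initialWord fun m w => ?_
  have hshift := ((continuous_measureReal_initialWord w).comp
    (ProbabilityMeasure.continuous_map (continuous_shiftMap (A := A)))).tendsto μ
  have hdiff := (tendsto_map_orbitAverage_sub η
    (measurable_initialWord m (.singleton w))).mono_left hU
  exact sub_eq_zero.1 (tendsto_nhds_unique ((hshift.comp hlim).sub
    (((continuous_measureReal_initialWord w).tendsto μ).comp hlim)) hdiff)

theorem exists_tendsto_orbitAverage (hX : IsSubshift X) (η : ℕ → ProbabilityMeasure (ℕ → A))
    (hη : ∀ n, (η n : Measure (ℕ → A)) X = 1) :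
    ∃ μ ∈ MInv X, ∃ U : Ultrafilter ℕ, (U : Filter ℕ) ≤ atTop ∧
      Tendsto (fun n => orbitAverage (η n) n) U (𝓝 μ) := by
  have hU : (hyperfilter ℕ : Filter ℕ) ≤ atTop :=
    hyperfilter_le_cofinite.trans_eq Nat.cofinite_eq_atTop
  obtain ⟨μ, -, hμ : Tendsto (fun n => orbitAverage (η n) n) (hyperfilter ℕ : Filter ℕ) (𝓝 μ)⟩ :=
    isCompact_univ.ultrafilter_le_nhds ((hyperfilter ℕ).map fun n => orbitAverage (η n) n)
      (by simp)
  refine ⟨μ, ⟨map_shiftMap_eq_of_tendsto_orbitAverage hU hμ, ?_⟩, hyperfilter ℕ, hU, hμ⟩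
  exact (isClosed_setOf_apply_eq_one hX.2.1.isClosed).mem_of_tendsto hμ
    (Eventually.of_forall fun n => orbitAverage_apply_eq_one hX (hη n) n)

theorem MInv_nonempty (hX : IsSubshift X) : (MInv X).Nonempty := by
  obtain ⟨x, hx⟩ := hX.1
  obtain ⟨μ, hμ, -⟩ := exists_tendsto_orbitAverage hX
    (fun _ => ⟨Measure.dirac x, inferInstance⟩) fun _ => by simp [hx]
  exact ⟨μ, hμ⟩

theorem isClosed_setOf_aePos (φ : List A → ℝ) (n : ℕ) :
    IsClosed {μ : ProbabilityMeasure (ℕ → A) | AEPos φ (μ : Measure (ℕ → A)) n} := by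
  simp only [aePos_iff, Set.ofPred_forall]
  exact isClosed_iInter fun w => isClosed_iInter fun _ =>
    isClosed_eq (continuous_measureReal_initialWord w) continuous_const

end

/-! ### Maximizers of the weighted pressure -/

/-- The points of `s` at which `F` attains its maximum on `s`; all sets of equilibrium states are
of this form. -/
def argmaxOn {α β : Type*} [Preorder β] (F : α → β) (s : Set α) : Set α := {a ∈ s | IsMaxOn F s a}

theorem setOf_eq_biSup {α β : Type*} [CompleteLattice β] (F : α → β) (s : Set α) :
    {a | a ∈ s ∧ F a = ⨆ x ∈ s, F x} = argmaxOn F s := by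
  ext a
  refine and_congr_right fun ha => ⟨fun h x hx => ?_, fun h => ?_⟩
  · exact (le_biSup F hx).trans_eq h.symm
  · exact (le_biSup F ha).antisymm (iSup₂_le h)

section
variable {Ω : Type*} [MeasurableSpace Ω] {t : ℝ} {μ₁ μ₂ μ : Measure Ω}

theorem isMixture_of_add_eq_one {a b : ℝ≥0∞} (hab : a + b = 1) (h : μ = a • μ₁ + b • μ₂) :
    IsMixture a.toReal μ₁ μ₂ μ := by
  have ha : a ≠ ⊤ := by rintro rfl; simp at hab
  have hb : b ≠ ⊤ := by rintro rfl; simp at hab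
  have hab' : 1 - a.toReal = b.toReal := by
    rw [← ENNReal.toReal_one, ← hab, ENNReal.toReal_add ha hb, add_sub_cancel_left]
  refine ⟨ENNReal.toReal_nonneg, sub_nonneg.1 (hab' ▸ ENNReal.toReal_nonneg), ?_⟩
  rw [hab', ENNReal.ofReal_toReal ha, ENNReal.ofReal_toReal hb, h]

theorem IsMixture.symm (h : IsMixture t μ₁ μ₂ μ) : IsMixture (1 - t) μ₂ μ₁ μ :=
  ⟨sub_nonneg.2 h.le_one, sub_le_self 1 h.nonneg, by rw [sub_sub_cancel, add_comm, h.eq]⟩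

theorem IsMixture.apply_eq_one [IsProbabilityMeasure μ₁] [IsProbabilityMeasure μ]
    (h : IsMixture t μ₁ μ₂ μ) (h0 : 0 < t) {s : Set Ω} (hs : MeasurableSet s) (hμ : μ s = 1) :
    μ₁ s = 1 := by
  rw [← prob_compl_eq_zero_iff hs] at hμ ⊢
  rw [h.eq] at hμ
  simp_all [h0.not_ge]

end

section
variable {A : Type} [MeasurableSpace A] {X : Set (ℕ → A)}

theorem IsMixture.mem_MInv {t : ℝ} {μ₁ μ₂ μ : ProbabilityMeasure (ℕ → A)}
    (h : IsMixture t (μ₁ : Measure (ℕ → A)) μ₂ μ) (h₁ : μ₁ ∈ MInv X) (h₂ : μ₂ ∈ MInv X) :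
    μ ∈ MInv X := by
  refine ⟨?_, ?_⟩
  · rw [(h.map measurable_shiftMap).eq, h₁.1, h₂.1, h.eq]
  · simp [h.eq, h₁.2, h₂.2, ← ENNReal.ofReal_add h.nonneg (sub_nonneg.2 h.le_one)]

theorem IsMixture.aePos_iff {φ : List A → ℝ} {t : ℝ} {μ₁ μ₂ μ : Measure (ℕ → A)}
    (h : IsMixture t μ₁ μ₂ μ) (h0 : 0 < t) (h1 : t < 1) (n : ℕ) :
    AEPos φ μ n ↔ AEPos φ μ₁ n ∧ AEPos φ μ₂ n := by
  rw [AEPos, h.eq, ae_add_measure_iff,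
    Measure.ae_ennreal_smul_measure_iff (ENNReal.ofReal_pos.2 h0).ne',
    Measure.ae_ennreal_smul_measure_iff (ENNReal.ofReal_pos.2 (sub_pos.2 h1)).ne']
  rfl

end

section
variable {ι A : Type} [Finite A] [MeasurableSpace A] [DiscreteMeasurableSpace A] {C : ι → Type}
  [∀ i, Fintype (C i)] [∀ i, MeasurableSpace (C i)] {τ : ∀ i, A → C i} {s : Finset ι} {w : ι → ℝ}
  {t : ℝ} {μ₁ μ₂ μ : Measure (ℕ → A)} [IsProbabilityMeasure μ₁] [IsProbabilityMeasure μ₂]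
  [IsProbabilityMeasure μ]

theorem IsMixture.le_blockPressure (hw : ∀ i ∈ s, 0 ≤ w i) (h : IsMixture t μ₁ μ₂ μ)
    (φ : List A → ℝ) (c : ℝ) (n : ℕ) :
    t * blockPressure τ s w φ c μ₁ n + (1 - t) * blockPressure τ s w φ c μ₂ n ≤
      blockPressure τ s w φ c μ n := by
  have hent := h.le_weightedBlockEntropy (τ := τ) hw n
  unfold blockPressure
  rw [h.logIntegral_eq]
  linarith

theorem IsMixture.blockPressure_le [∀ i, DiscreteMeasurableSpace (C i)] (hw : ∀ i ∈ s, 0 ≤ w i)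
    (h : IsMixture t μ₁ μ₂ μ) (φ : List A → ℝ) (c : ℝ) (n : ℕ) :
    blockPressure τ s w φ c μ n ≤
      t * blockPressure τ s w φ c μ₁ n + (1 - t) * blockPressure τ s w φ c μ₂ n +
        (∑ i ∈ s, w i) * (Real.negMulLog t + Real.negMulLog (1 - t)) := by
  have hent := h.weightedBlockEntropy_le (τ := τ) hw n
  unfold blockPressure
  rw [h.logIntegral_eq]
  linarith

end

theorem isProbabilityMeasure_mixture {Ω : Type*} [MeasurableSpace Ω] {t : ℝ} (h0 : 0 ≤ t)
    (h1 : t ≤ 1) (μ₁ μ₂ : Measure Ω) [IsProbabilityMeasure μ₁] [IsProbabilityMeasure μ₂] :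
    IsProbabilityMeasure (ENNReal.ofReal t • μ₁ + ENNReal.ofReal (1 - t) • μ₂) :=
  ⟨by simp [← ENNReal.ofReal_add h0 (sub_nonneg.2 h1)]⟩

theorem tendsto_coe_convexComb {α : Type*} {l : Filter α} {u v : α → ℝ} {y z : EReal}
    (hu : Tendsto (fun n => (u n : EReal)) l (𝓝 y)) (hv : Tendsto (fun n => (v n : EReal)) l (𝓝 z))
    (hy : y ≠ ⊤) (hz : z ≠ ⊤) {a b : ℝ} (ha : 0 ≤ a) (hb : 0 ≤ b) :
    Tendsto (fun n => ((a * u n + b * v n : ℝ) : EReal)) l (𝓝 (a * y + b * z)) := by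
  have hne {e : ℝ} (he : 0 ≤ e) {x : EReal} (hx : x ≠ ⊤) : (e : EReal) * x ≠ ⊤ := by
    rw [EReal.mul_ne_top]
    simp [hx, he]
  have hadd := EReal.continuousAt_add (p := ((a : EReal) * y, (b : EReal) * z))
    (.inl (hne ha hy)) (.inr (hne hb hz))
  simp only [EReal.coe_add, EReal.coe_mul]
  exact hadd.tendsto.comp ((EReal.Tendsto.const_mul hu (by simp) (by simp)).prodMk_nhds
    (EReal.Tendsto.const_mul hv (.inl (EReal.coe_ne_bot b)) (.inl (EReal.coe_ne_top b))))

theorem coe_mul_add_coe_one_sub_mul {t : ℝ} (h0 : 0 ≤ t) (h1 : t ≤ 1) (y : EReal) :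
    (t : EReal) * y + ((1 - t : ℝ) : EReal) * y = y := by
  rw [← EReal.right_distrib_of_nonneg (EReal.coe_nonneg.2 h0)
    (EReal.coe_nonneg.2 (sub_nonneg.2 h1)), ← EReal.coe_add, add_sub_cancel, EReal.coe_one, one_mul]

theorem le_of_le_convexComb {t : ℝ} (h0 : 0 < t) (h1 : t < 1) {x y z : EReal} (hy : y ≤ z)
    (hz : z ≠ ⊤) (h : z ≤ t * x + (1 - t : ℝ) * y) : z ≤ x := by
  induction z with
  | bot => exact bot_le
  | top => exact absurd rfl hz
  | coe z =>
    induction x with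
    | top => exact le_top
    | bot => simp [EReal.coe_mul_bot_of_pos h0] at h
    | coe x =>
      induction y with
      | top => simp at hy
      | bot =>
        rw [EReal.coe_mul_bot_of_pos (sub_pos.2 h1), EReal.add_bot] at h
        simp at h
      | coe y =>
        norm_cast at h hy ⊢
        nlinarith

namespace IsWeightedFamily

variable {ι A : Type} [Finite A] [TopologicalSpace A] [DiscreteTopology A] [MeasurableSpace A]
  [BorelSpace A] {C : ι → Type} [∀ i, Fintype (C i)] [∀ i, TopologicalSpace (C i)]
  [∀ i, DiscreteTopology (C i)] [∀ i, MeasurableSpace (C i)] [∀ i, BorelSpace (C i)]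
  {X : Set (ℕ → A)} {τ : ∀ i, A → C i} {Y : ∀ i, Set (ℕ → C i)} {s : Finset ι} {w : ι → ℝ}
  {φ : List A → ℝ} {c : ℝ}

theorem upperSemicontinuousOn (h : IsWeightedFamily X τ Y s w) (hφ : IsSubmultOn X φ c) :
    UpperSemicontinuousOn (weightedPressure τ Y s w (genPot φ)) (MInv X) := by
  intro μ hμ y hy
  obtain ⟨r, hμr, hry⟩ := EReal.lt_iff_exists_real_btwn.1 hy
  have hclosed : IsClosed {η : ProbabilityMeasure (ℕ → A) |
      (∀ n, AEPos φ (η : Measure (ℕ → A)) n) ∧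
      ∀ n : ℕ, n ≠ 0 → n * r ≤ blockPressure τ s w φ c (η : Measure (ℕ → A)) n} := by
    simp only [Set.ofPred_and, Set.ofPred_forall]
    exact (isClosed_iInter fun n => isClosed_setOf_aePos φ n).inter (isClosed_iInter fun n =>
      isClosed_iInter fun _ => isClosed_le continuous_const (continuous_blockPressure φ c n))
  have hnot := (h.coe_le_weightedPressure_iff hφ hμ r).not.1 hμr.not_ge
  filter_upwards [mem_nhdsWithin_of_mem_nhds (hclosed.isOpen_compl.mem_nhds hnot),
    self_mem_nhdsWithin] with η hη hηX
  exact (lt_of_not_ge ((h.coe_le_weightedPressure_iff hφ hηX r).not.2 hη)).trans hry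

theorem argmaxOn_nonempty (h : IsWeightedFamily X τ Y s w) (hφ : IsSubmultOn X φ c) :
    (argmaxOn (weightedPressure τ Y s w (genPot φ)) (MInv X)).Nonempty :=
  (h.upperSemicontinuousOn hφ).exists_isMaxOn (MInv_nonempty h.source) (isCompact_MInv h.source)

theorem isCompact_argmaxOn (h : IsWeightedFamily X τ Y s w) (hφ : IsSubmultOn X φ c) :
    IsCompact (argmaxOn (weightedPressure τ Y s w (genPot φ)) (MInv X)) := by
  obtain ⟨μ, hμ, hmax⟩ := h.argmaxOn_nonempty hφ
  convert (h.upperSemicontinuousOn hφ).isCompact_inter_preimage_Ici (isCompact_MInv h.source)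
    (weightedPressure τ Y s w (genPot φ) μ) using 1
  ext η
  exact and_congr_right fun _ => ⟨fun hη => hη hμ, fun hη => isMaxOn_iff.2 fun ζ hζ =>
    le_trans (hmax hζ) hη⟩

theorem weightedPressure_mixture (h : IsWeightedFamily X τ Y s w) (hφ : IsSubmultOn X φ c) {t : ℝ}
    {μ₁ μ₂ μ : ProbabilityMeasure (ℕ → A)} (h₁ : μ₁ ∈ MInv X) (h₂ : μ₂ ∈ MInv X)
    (hmix : IsMixture t (μ₁ : Measure (ℕ → A)) μ₂ μ) (h0 : 0 < t) (h1 : t < 1) :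
    weightedPressure τ Y s w (genPot φ) μ = t * weightedPressure τ Y s w (genPot φ) μ₁ +
      (1 - t : ℝ) * weightedPressure τ Y s w (genPot φ) μ₂ := by
  have hμ := hmix.mem_MInv h₁ h₂
  by_cases hpos : ∀ n, AEPos φ (μ : Measure (ℕ → A)) n
  · have hlim := h.tendsto_blockPressure_div hφ hμ hpos
    simp only [hmix.aePos_iff h0 h1, forall_and] at hpos
    have hcomb := tendsto_coe_convexComb (h.tendsto_blockPressure_div hφ h₁ hpos.1)
      (h.tendsto_blockPressure_div hφ h₂ hpos.2) (h.weightedPressure_lt_top hφ h₁).ne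
      (h.weightedPressure_lt_top hφ h₂).ne h0.le (sub_nonneg.2 h1.le)
    have hcomb' := tendsto_coe_add_coe hcomb (tendsto_const_div_atTop_nhds_zero_nat
      ((∑ i ∈ s, w i) * (Real.negMulLog t + Real.negMulLog (1 - t))))
    rw [EReal.coe_zero, add_zero] at hcomb'
    refine le_antisymm (le_of_tendsto_of_tendsto' hlim hcomb' fun n => ?_)
      (le_of_tendsto_of_tendsto' hcomb hlim fun n => ?_) <;>
    rw [EReal.coe_le_coe_iff, ← mul_div_assoc, ← mul_div_assoc, ← add_div]
    · rw [← add_div]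
      gcongr
      exact hmix.blockPressure_le h.weight_nonneg φ c n
    · gcongr
      exact hmix.le_blockPressure h.weight_nonneg φ c n
  · rw [weightedPressure_eq_bot h.source hφ hμ hpos]
    simp only [hmix.aePos_iff h0 h1, forall_and, not_and_or] at hpos
    rcases hpos with hpos | hpos
    · rw [weightedPressure_eq_bot h.source hφ h₁ hpos, EReal.coe_mul_bot_of_pos h0, EReal.bot_add]
    · rw [weightedPressure_eq_bot h.source hφ h₂ hpos, EReal.coe_mul_bot_of_pos (sub_pos.2 h1),
        EReal.add_bot]

theorem mem_argmaxOn_of_isMixture (h : IsWeightedFamily X τ Y s w) (hφ : IsSubmultOn X φ c) {t : ℝ}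
    {μ₁ μ₂ μ : ProbabilityMeasure (ℕ → A)}
    (hμ : μ ∈ argmaxOn (weightedPressure τ Y s w (genPot φ)) (MInv X))
    (h₁ : μ₁ ∈ MInv X) (h₂ : μ₂ ∈ MInv X)
    (hmix : IsMixture t (μ₁ : Measure (ℕ → A)) μ₂ μ) (h0 : 0 < t) (h1 : t < 1) :
    μ₁ ∈ argmaxOn (weightedPressure τ Y s w (genPot φ)) (MInv X) :=
  ⟨h₁, isMaxOn_iff.2 fun _ hη => (hμ.2 hη).trans (le_of_le_convexComb h0 h1 (hμ.2 h₂)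
    (h.weightedPressure_lt_top hφ hμ.1).ne (h.weightedPressure_mixture hφ h₁ h₂ hmix h0 h1).le)⟩

theorem convexPM_argmaxOn (h : IsWeightedFamily X τ Y s w) (hφ : IsSubmultOn X φ c) :
    ConvexPM (argmaxOn (weightedPressure τ Y s w (genPot φ)) (MInv X)) := by
  intro μ₁ h₁ μ₂ h₂ t h0 h1 μ hμ
  rcases h0.eq_or_lt with rfl | h0
  · have : μ = μ₂ := Subtype.ext (by simpa using hμ)
    rwa [this]
  rcases h1.eq_or_lt with rfl | h1
  · have : μ = μ₁ := Subtype.ext (by simpa using hμ)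
    rwa [this]
  have hmix : IsMixture t (μ₁ : Measure (ℕ → A)) μ₂ μ := ⟨h0.le, h1.le, hμ⟩
  have heq : weightedPressure τ Y s w (genPot φ) μ₂ = weightedPressure τ Y s w (genPot φ) μ₁ :=
    le_antisymm (h₁.2 h₂.1) (h₂.2 h₁.1)
  refine ⟨hmix.mem_MInv h₁.1 h₂.1, isMaxOn_iff.2 fun η hη => (h₁.2 hη).trans_eq ?_⟩
  rw [h.weightedPressure_mixture hφ h₁.1 h₂.1 hmix h0 h1, heq,
    coe_mul_add_coe_one_sub_mul h0.le h1.le]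

theorem ergodic_of_isExtremePM (h : IsWeightedFamily X τ Y s w) (hφ : IsSubmultOn X φ c)
    {μ : ProbabilityMeasure (ℕ → A)}
    (hμ : IsExtremePM (argmaxOn (weightedPressure τ Y s w (genPot φ)) (MInv X)) μ) :
    Ergodic shiftMap (μ : Measure (ℕ → A)) := by
  obtain ⟨⟨hinv, hX⟩, -⟩ := hμ.1
  refine Ergodic.of_mem_extremePoints ⟨⟨⟨measurable_shiftMap, hinv⟩, inferInstance⟩, ?_⟩
  rintro ν₁ ⟨hν₁, hp₁⟩ ν₂ ⟨hν₂, hp₂⟩ ⟨a, b, ha, hb, hab, heq⟩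
  have hmix := isMixture_of_add_eq_one hab heq.symm
  have h0 : 0 < a.toReal := ENNReal.toReal_pos ha.ne' (by rintro rfl; simp at hab)
  have h1 : a.toReal < 1 := by
    rw [← ENNReal.toReal_one, ← hab]
    exact ENNReal.toReal_strict_mono (by simp [hab])
      (ENNReal.lt_add_right (by rintro rfl; simp at hab) hb.ne')
  have hsymm := hmix.symm
  obtain ⟨ν₁, rfl⟩ : ∃ ν : ProbabilityMeasure (ℕ → A), ν = ν₁ := ⟨⟨ν₁, hp₁⟩, rfl⟩
  obtain ⟨ν₂, rfl⟩ : ∃ ν : ProbabilityMeasure (ℕ → A), ν = ν₂ := ⟨⟨ν₂, hp₂⟩, rfl⟩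
  have hXm := h.source.measurableSet
  have hmem₁ : ν₁ ∈ MInv X := ⟨hν₁.map_eq, hmix.apply_eq_one h0 hXm hX⟩
  have hmem₂ : ν₂ ∈ MInv X := ⟨hν₂.map_eq, hsymm.apply_eq_one (sub_pos.2 h1) hXm hX⟩
  have heq' := hμ.2 ν₁ (h.mem_argmaxOn_of_isMixture hφ hμ.1 hmem₁ hmem₂ hmix h0 h1)
    ν₂ (h.mem_argmaxOn_of_isMixture hφ hμ.1 hmem₂ hmem₁ hsymm (sub_pos.2 h1) (by linarith))
    _ h0 h1 hmix.eq
  rw [← heq, ← heq', ← add_smul, hab, one_smul]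

end IsWeightedFamily

/-! ### Compact convex sets with a unique extreme point -/

section
variable {A : Type} [MeasurableSpace A] {S : Set (ProbabilityMeasure (ℕ → A))}

/-- The measure of all cylinders, an affine embedding of the probability measures on `ℕ → A`
into a locally convex space. -/
def cylinderProbs (μ : ProbabilityMeasure (ℕ → A)) (u : Σ n, Fin n → A) : ℝ :=
  (μ : Measure (ℕ → A)).real (initialWord u.1 ⁻¹' {u.2})

theorem IsMixture.cylinderProbs_eq {t : ℝ} {μ₁ μ₂ μ : ProbabilityMeasure (ℕ → A)}
    (h : IsMixture t (μ₁ : Measure (ℕ → A)) μ₂ μ) :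
    cylinderProbs μ = t • cylinderProbs μ₁ + (1 - t) • cylinderProbs μ₂ :=
  funext fun _ => h.measureReal_eq _

theorem ConvexPM.convex_image_cylinderProbs (hS : ConvexPM S) : Convex ℝ (cylinderProbs '' S) := by
  rintro _ ⟨μ₁, h₁, rfl⟩ _ ⟨μ₂, h₂, rfl⟩ a b ha hb hab
  obtain rfl := eq_sub_of_add_eq' hab
  have ha1 := sub_nonneg.1 hb
  let μ : ProbabilityMeasure (ℕ → A) := ⟨_, isProbabilityMeasure_mixture ha ha1 μ₁ μ₂⟩
  have hμ : IsMixture a (μ₁ : Measure (ℕ → A)) μ₂ μ := ⟨ha, ha1, rfl⟩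
  exact ⟨μ, hS μ₁ h₁ μ₂ h₂ a ha ha1 μ rfl, hμ.cylinderProbs_eq⟩

variable [Finite A] [DiscreteMeasurableSpace A]

theorem injective_cylinderProbs : Function.Injective (cylinderProbs (A := A)) :=
  fun μ ν h => Subtype.ext <| ext_of_initialWord (μ := (μ : Measure (ℕ → A))) (ν := ν) fun n w =>
    congrFun h ⟨n, w⟩

theorem isExtremePM_of_mem_extremePoints {μ : ProbabilityMeasure (ℕ → A)} (hμ : μ ∈ S)
    (hext : cylinderProbs μ ∈ (cylinderProbs '' S).extremePoints ℝ) : IsExtremePM S μ := by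
  refine ⟨hμ, fun μ₁ h₁ μ₂ h₂ t h0 h1 heq => ?_⟩
  have hmix : IsMixture t (μ₁ : Measure (ℕ → A)) μ₂ μ := ⟨h0.le, h1.le, heq⟩
  have hseg : cylinderProbs μ ∈ openSegment ℝ (cylinderProbs μ₁) (cylinderProbs μ₂) :=
    ⟨t, 1 - t, h0, sub_pos.2 h1, add_sub_cancel t 1, hmix.cylinderProbs_eq.symm⟩
  have hseg' := hseg
  rw [openSegment_symm] at hseg'
  exact injective_cylinderProbs ((hext.2 ⟨μ₁, h₁, rfl⟩ ⟨μ₂, h₂, rfl⟩ hseg).trans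
    (hext.2 ⟨μ₂, h₂, rfl⟩ ⟨μ₁, h₁, rfl⟩ hseg').symm)

end

section
variable {A : Type} [Finite A] [TopologicalSpace A] [DiscreteTopology A] [MeasurableSpace A]
  [BorelSpace A] {S : Set (ProbabilityMeasure (ℕ → A))}

theorem continuous_cylinderProbs : Continuous (cylinderProbs (A := A)) :=
  continuous_pi fun u => continuous_measureReal_initialWord u.2

theorem eq_of_forall_isExtremePM_eq (hS : IsCompact S) (hconv : ConvexPM S)
    {ρ : ProbabilityMeasure (ℕ → A)} (hext : ∀ μ, IsExtremePM S μ → μ = ρ) : ∀ μ ∈ S, μ = ρ := by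
  have hsub : (cylinderProbs '' S).extremePoints ℝ ⊆ {cylinderProbs ρ} := by
    rintro _ hx
    obtain ⟨μ, hμ, rfl⟩ := hx.1
    exact congrArg cylinderProbs (hext μ (isExtremePM_of_mem_extremePoints hμ hx))
  have hKM := closure_convexHull_extremePoints (hS.image continuous_cylinderProbs)
    hconv.convex_image_cylinderProbs
  intro μ hμ
  have hmem : cylinderProbs μ ∈ closure (convexHull ℝ {cylinderProbs ρ}) :=
    closure_mono (convexHull_mono hsub) (hKM.symm ▸ Set.mem_image_of_mem cylinderProbs hμ)
  rw [convexHull_singleton, closure_singleton] at hmem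
  exact injective_cylinderProbs hmem

end

/-! ### The Misiurewicz argument -/

theorem le_add_sum_windows {g : ℕ → ℕ → ℝ} {N m : ℕ} {K : ℝ} (hm : m ≠ 0)
    (hsub : ∀ i a b, i + a + b ≤ N → g i (a + b) ≤ g i a + g (i + a) b)
    (hK : ∀ i l, l ≤ m → i + l ≤ N → g i l ≤ K) (L : ℕ) :
    ∀ r, r + L ≤ N → g r L ≤ K + ∑ j ∈ Finset.range (L / m), g (r + j * m) m := by
  induction L using Nat.strong_induction_on with
  | _ L ih =>
    intro r hr
    rcases lt_or_ge L m with hLm | hLm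
    · rw [Nat.div_eq_of_lt hLm]
      simpa using hK r L hLm.le hr
    · obtain ⟨d, rfl⟩ := Nat.exists_eq_add_of_le hLm
      have hfirst := hsub r m d (by omega)
      have hrest := ih d (by omega) (r + m) (by omega)
      have hshift : ∀ j, r + m + j * m = r + (j + 1) * m := fun j => by ring
      simp only [hshift] at hrest
      rw [Nat.add_div_left d (by omega), Finset.sum_range_succ']
      simp only [zero_mul, add_zero]
      linarith

theorem sum_residue_windows {M : Type*} [AddCommMonoid M] (f : ℕ → M) {N m : ℕ} (hm : m ≠ 0)
    (hmN : m ≤ N) :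
    ∑ r ∈ Finset.range m, ∑ j ∈ Finset.range ((N - r) / m), f (r + j * m) =
      ∑ i ∈ Finset.range (N + 1 - m), f i := by
  have hlt : ∀ r j, j < (N - r) / m ↔ m + j * m ≤ N - r := fun r j => by
    rw [Nat.lt_iff_add_one_le, Nat.le_div_iff_mul_le (Nat.pos_of_ne_zero hm), Nat.succ_mul,
      add_comm]
  rw [Finset.sum_sigma']
  refine Finset.sum_nbij' (fun x => x.1 + x.2 * m) (fun i => ⟨i % m, i / m⟩) ?_ ?_ ?_ ?_
    (fun _ _ => rfl)
  · rintro ⟨r, j⟩ hx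
    simp only [Finset.mem_sigma, Finset.mem_range, hlt] at hx ⊢
    omega
  · intro i hi
    simp only [Finset.mem_sigma, Finset.mem_range, hlt] at hi ⊢
    have hdiv := Nat.mod_add_div' i m
    exact ⟨Nat.mod_lt _ (Nat.pos_of_ne_zero hm), by omega⟩
  · rintro ⟨r, j⟩ hx
    have hr : r < m := Finset.mem_range.1 (Finset.mem_sigma.1 hx).1
    simp only [Nat.add_mul_mod_self_right, Nat.mod_eq_of_lt hr,
      Nat.add_mul_div_right _ _ (Nat.pos_of_ne_zero hm), Nat.div_eq_of_lt hr, zero_add]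
  · intro i _
    exact Nat.mod_add_div' i m

/-- Cutting `[0, N)` into consecutive windows of length `m` with each of the `m` possible offsets
meets every window exactly once. -/
theorem mul_le_sum_windows {g : ℕ → ℕ → ℝ} {N m : ℕ} {K : ℝ} (hm : m ≠ 0) (hmN : m ≤ N)
    (hsub : ∀ i a b, i + a + b ≤ N → g i (a + b) ≤ g i a + g (i + a) b)
    (hK : ∀ i l, l ≤ m → i + l ≤ N → g i l ≤ K) :
    m * g 0 N ≤ ∑ i ∈ Finset.range (N + 1 - m), g i m + m * (2 * K) := by
  have hoffset : ∀ r ∈ Finset.range m,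
      g 0 N ≤ ∑ j ∈ Finset.range ((N - r) / m), g (r + j * m) m + 2 * K := by
    intro r hr
    have hrm := Finset.mem_range.1 hr
    have hsplit := hsub 0 r (N - r) (by omega)
    rw [zero_add, Nat.add_sub_cancel' (by omega)] at hsplit
    have hhead := hK 0 r hrm.le (by omega)
    have htail := le_add_sum_windows hm hsub hK (N - r) r (by omega)
    linarith
  have hsum := Finset.sum_le_sum hoffset
  rwa [Finset.sum_const, Finset.sum_add_distrib, sum_residue_windows (g · m) hm hmN,
    Finset.sum_const, Finset.card_range, nsmul_eq_mul, nsmul_eq_mul] at hsum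

theorem sum_range_le_sum_range_add {f : ℕ → ℝ} {C : ℝ} (hf : ∀ i, -C ≤ f i) {a b : ℕ}
    (hab : a ≤ b) :
    ∑ i ∈ Finset.range a, f i ≤ ∑ i ∈ Finset.range b, f i + (b - a : ℕ) * C := by
  have htail : ∑ _i ∈ Finset.Ico a b, -C ≤ ∑ i ∈ Finset.Ico a b, f i :=
    Finset.sum_le_sum fun i _ => hf i
  rw [Finset.sum_const, Nat.card_Ico, nsmul_eq_mul] at htail
  linarith [Finset.sum_range_add_sum_Ico f hab]

section
variable {A : Type} [MeasurableSpace A]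

theorem map_iterate_map_iterate (μ : Measure (ℕ → A)) (i j : ℕ) :
    (μ.map shiftMap^[i]).map shiftMap^[j] = μ.map shiftMap^[i + j] := by
  rw [Measure.map_map (measurable_iterate_shiftMap j) (measurable_iterate_shiftMap i),
    ← Function.iterate_add, add_comm]

theorem abs_measureReal_orbitAverage_sub_le (η : ProbabilityMeasure (ℕ → A)) {n m : ℕ}
    {E : Set (ℕ → A)} {r : ℝ} (hr0 : 0 ≤ r) (hr1 : r ≤ 1)
    (h : ∀ i, i + m ≤ n + 1 → ((η : Measure (ℕ → A)).map shiftMap^[i]).real E = r) :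
    |(orbitAverage η n : Measure (ℕ → A)).real E - r| ≤ m * (1 / ((n : ℝ) + 1)) := by
  have hsub : (orbitAverage η n : Measure (ℕ → A)).real E - r = ((n : ℝ) + 1)⁻¹ *
      ∑ i ∈ Finset.range (n + 1), (((η : Measure (ℕ → A)).map shiftMap^[i]).real E - r) := by
    rw [measureReal_orbitAverage, Finset.sum_sub_distrib, Finset.sum_const, Finset.card_range,
      nsmul_eq_mul, Nat.cast_succ]
    field_simp
  have hterm : ∀ i ∈ Finset.range (n + 1),
      |((η : Measure (ℕ → A)).map shiftMap^[i]).real E - r| ≤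
        if n + 1 < i + m then 1 else 0 := by
    intro i _
    split_ifs with hi
    · exact abs_sub_le_of_nonneg_of_le measureReal_nonneg measureReal_le_one hr0 hr1
    · rw [h i (not_lt.1 hi), sub_self, abs_zero]
  have hcard : ((Finset.range (n + 1)).filter fun i => n + 1 < i + m).card ≤ m :=
    calc _ ≤ (Finset.Ico (n + 1 - m) (n + 1)).card := Finset.card_le_card fun i hi => by
          simp only [Finset.mem_filter, Finset.mem_range, Finset.mem_Ico] at hi ⊢
          omega
      _ ≤ m := by rw [Nat.card_Ico]; omega
  rw [hsub, abs_mul, abs_of_pos (by positivity), mul_comm, one_div]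
  refine mul_le_mul_of_nonneg_right ?_ (by positivity)
  calc _ ≤ ∑ i ∈ Finset.range (n + 1), if n + 1 < i + m then (1 : ℝ) else 0 :=
        (Finset.abs_sum_le_sum_abs _ _).trans (Finset.sum_le_sum hterm)
    _ ≤ m := by
        rw [Finset.sum_boole]
        exact_mod_cast hcard

/-- `a H_n(μ) + ∫ log φ_n dμ`. -/
noncomputable def blockFreeEnergy [Fintype A] (a : ℝ) (φ : List A → ℝ) (μ : Measure (ℕ → A))
    (n : ℕ) : ℝ :=
  a * blockEntropy μ n + logIntegral φ μ n

/-- A bound on `|blockFreeEnergy a φ μ n|` which is uniform in the probability measure `μ`. -/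
noncomputable def freeEnergyBound [Fintype A] (a : ℝ) (φ : List A → ℝ) (n : ℕ) : ℝ :=
  a * (n * Real.log (Fintype.card A)) + ∑ w : Fin n → A, |Real.log (φ (List.ofFn w))|

variable [Fintype A] [DiscreteMeasurableSpace A] {a : ℝ}

theorem abs_blockFreeEnergy_le (ha : 0 ≤ a) (φ : List A → ℝ) (μ : Measure (ℕ → A))
    [IsProbabilityMeasure μ] (n : ℕ) : |blockFreeEnergy a φ μ n| ≤ freeEnergyBound a φ n := by
  refine (abs_add_le _ _).trans (add_le_add ?_ ?_)
  · rw [abs_of_nonneg (mul_nonneg ha (blockEntropy_nonneg μ n))]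
    exact mul_le_mul_of_nonneg_left (blockEntropy_le μ n) ha
  · rw [logIntegral_eq_sum]
    refine (Finset.abs_sum_le_sum_abs _ _).trans (Finset.sum_le_sum fun w _ => ?_)
    rw [abs_mul, abs_of_nonneg measureReal_nonneg]
    exact mul_le_of_le_one_left (abs_nonneg _) measureReal_le_one

theorem sum_blockFreeEnergy_le (ha : 0 ≤ a) (φ : List A → ℝ) (η : ProbabilityMeasure (ℕ → A))
    (n m : ℕ) :
    ∑ i ∈ Finset.range (n + 1), blockFreeEnergy a φ ((η : Measure (ℕ → A)).map shiftMap^[i]) m ≤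
      ((n : ℝ) + 1) * blockFreeEnergy a φ (orbitAverage η n : Measure (ℕ → A)) m := by
  unfold blockFreeEnergy
  rw [Finset.sum_add_distrib, sum_logIntegral_eq, ← Finset.mul_sum, mul_add, mul_left_comm]
  gcongr
  exact sum_blockEntropy_le η n m

end

section
variable {A : Type} [TopologicalSpace A] [DiscreteTopology A] [MeasurableSpace A]
  [BorelSpace A] {X : Set (ℕ → A)} {φ : List A → ℝ} {a c : ℝ}

section
variable [Finite A]

theorem IsSubshift.ae_mem_map_iterate (hX : IsSubshift X) {μ : Measure (ℕ → A)}
    (hμ : ∀ᵐ x ∂μ, x ∈ X) (i : ℕ) : ∀ᵐ x ∂(μ.map shiftMap^[i]), x ∈ X :=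
  (ae_map_iff (measurable_iterate_shiftMap i).aemeasurable hX.measurableSet).2
    (hμ.mono fun _ hx => hX.iterate_shiftMap_mem i hx)

theorem measureReal_initialWord_of_tendsto_orbitAverage {μ : ProbabilityMeasure (ℕ → A)}
    {U : Ultrafilter ℕ} (hU : U ≤ (atTop : Filter ℕ)) {η : ℕ → ProbabilityMeasure (ℕ → A)}
    (hlim : Tendsto (fun n => orbitAverage (η n) n) U (𝓝 μ)) {m : ℕ} {w : Fin m → A} {r : ℝ}
    (hr0 : 0 ≤ r) (hr1 : r ≤ 1) (h : ∀ᶠ n in atTop, ∀ i, i + m ≤ n + 1 →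
      ((η n : Measure (ℕ → A)).map shiftMap^[i]).real (initialWord m ⁻¹' {w}) = r) :
    (μ : Measure (ℕ → A)).real (initialWord m ⁻¹' {w}) = r := by
  have hzero : Tendsto (fun n : ℕ => (m : ℝ) * (1 / ((n : ℝ) + 1))) atTop (𝓝 0) := by
    simpa using (tendsto_one_div_add_atTop_nhds_zero_nat (𝕜 := ℝ)).const_mul (m : ℝ)
  have hsub : Tendsto (fun n => (orbitAverage (η n) n : Measure (ℕ → A)).real
      (initialWord m ⁻¹' {w}) - r) atTop (𝓝 0) := squeeze_zero_norm'
    (h.mono fun n hn => abs_measureReal_orbitAverage_sub_le (η n) hr0 hr1 hn) hzero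
  have hreal := ((continuous_measureReal_initialWord w).tendsto μ).comp hlim
  exact sub_eq_zero.1 (tendsto_nhds_unique (hreal.sub_const r) (hsub.mono_left hU))

theorem aePos_of_tendsto_orbitAverage (hX : IsSubshift X) (hφ : IsSubmultOn X φ c)
    {μ : ProbabilityMeasure (ℕ → A)} {U : Ultrafilter ℕ} (hU : U ≤ (atTop : Filter ℕ))
    {η : ℕ → ProbabilityMeasure (ℕ → A)} (hη : ∀ n, (η n : Measure (ℕ → A)) X = 1)
    (hlim : Tendsto (fun n => orbitAverage (η n) n) U (𝓝 μ))
    (hpos : ∀ᶠ n in atTop, AEPos φ (η n : Measure (ℕ → A)) (n + 1)) (m : ℕ) :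
    AEPos φ (μ : Measure (ℕ → A)) m := by
  refine (aePos_iff _ _ _).2 fun w hw =>
    measureReal_initialWord_of_tendsto_orbitAverage hU hlim le_rfl zero_le_one ?_
  filter_upwards [hpos] with n hn i hi
  exact (aePos_iff _ _ _).1 (hn.map_iterate hX hφ (hX.ae_mem (hη n)) hi) w hw

end

section
variable [Fintype A]

theorem continuous_blockFreeEnergy (a : ℝ) (φ : List A → ℝ) (n : ℕ) : Continuous
    fun μ : ProbabilityMeasure (ℕ → A) => blockFreeEnergy a φ (μ : Measure (ℕ → A)) n :=
  (continuous_const.mul (continuous_blockEntropy n)).add (continuous_logIntegral φ n)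

theorem IsSubmultOn.blockFreeEnergy_add_le (hX : IsSubshift X) (h : IsSubmultOn X φ c)
    (ha : 0 ≤ a) {μ : Measure (ℕ → A)} [IsProbabilityMeasure μ] (hμ : ∀ᵐ x ∂μ, x ∈ X) {m l : ℕ}
    (hpos : AEPos φ μ (m + l)) :
    blockFreeEnergy a φ μ (m + l) ≤
      blockFreeEnergy a φ μ m + blockFreeEnergy a φ (μ.map shiftMap^[m]) l + Real.log c⁻¹ := by
  have hent := mul_le_mul_of_nonneg_left (blockEntropy_add_le μ m l) ha
  have hlog := h.logIntegral_add_le hX hμ hpos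
  unfold blockFreeEnergy
  linarith

theorem exists_mul_blockFreeEnergy_le (hX : IsSubshift X) (hφ : IsSubmultOn X φ c) (ha : 0 ≤ a)
    {m : ℕ} (hm : m ≠ 0) :
    ∃ K : ℝ, ∀ (n : ℕ) (η : ProbabilityMeasure (ℕ → A)), m ≤ n + 1 →
      (η : Measure (ℕ → A)) X = 1 → AEPos φ (η : Measure (ℕ → A)) (n + 1) →
      m * blockFreeEnergy a φ (η : Measure (ℕ → A)) (n + 1) ≤ ((n : ℝ) + 1) *
        (blockFreeEnergy a φ (orbitAverage η n : Measure (ℕ → A)) m + Real.log c⁻¹) + K := by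
  have hbound : ∀ l, 0 ≤ freeEnergyBound a φ l := fun l => by unfold freeEnergyBound; positivity
  set K := ∑ l ∈ Finset.range (m + 1), freeEnergyBound a φ l + Real.log c⁻¹
  refine ⟨m * (2 * K) + m * freeEnergyBound a φ m, fun n η hmn hη hpos => ?_⟩
  have hmem := hX.ae_mem hη
  set g : ℕ → ℕ → ℝ := fun i l =>
    blockFreeEnergy a φ ((η : Measure (ℕ → A)).map shiftMap^[i]) l + Real.log c⁻¹ with hg
  have hgsub : ∀ i l l', i + l + l' ≤ n + 1 → g i (l + l') ≤ g i l + g (i + l) l' := by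
    intro i l l' hi
    have hadd := hφ.blockFreeEnergy_add_le hX ha (hX.ae_mem_map_iterate hmem i)
      (hpos.map_iterate hX hφ hmem (by omega : i + (l + l') ≤ n + 1))
    rw [map_iterate_map_iterate] at hadd
    linarith
  have hgK : ∀ i l, l ≤ m → i + l ≤ n + 1 → g i l ≤ K := fun i l hl _ => by
    have hle := (abs_le.1 (abs_blockFreeEnergy_le ha φ ((η : Measure _).map shiftMap^[i]) l)).2
    have hsum := Finset.single_le_sum (fun l _ => hbound l) (Finset.mem_range_succ_iff.2 hl)
    exact add_le_add (hle.trans hsum) le_rfl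
  have hglow : ∀ i, -freeEnergyBound a φ m ≤ g i m := fun i => by
    have hle := (abs_le.1 (abs_blockFreeEnergy_le ha φ ((η : Measure _).map shiftMap^[i]) m)).1
    linarith [hφ.log_inv_nonneg]
  have hwindows := mul_le_sum_windows hm hmn hgsub hgK
  have htail := sum_range_le_sum_range_add hglow (show n + 1 + 1 - m ≤ n + 1 by omega)
  have hcount : ((n + 1 - (n + 1 + 1 - m) : ℕ) : ℝ) ≤ m := by exact_mod_cast (by omega)
  have hboundary := mul_le_mul_of_nonneg_right hcount (hbound m)
  have haverage := sum_blockFreeEnergy_le ha φ η n m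
  simp only [hg, Finset.sum_add_distrib, Finset.sum_const, Finset.card_range, nsmul_eq_mul,
    Function.iterate_zero, Measure.map_id, Nat.cast_succ] at hwindows htail
  have hlog := mul_nonneg (Nat.cast_nonneg m) hφ.log_inv_nonneg
  linarith

theorem le_blockFreeEnergy_of_tendsto_orbitAverage (hX : IsSubshift X) (hφ : IsSubmultOn X φ c)
    (ha : 0 ≤ a) {μ : ProbabilityMeasure (ℕ → A)} {U : Ultrafilter ℕ}
    (hU : U ≤ (atTop : Filter ℕ)) {η : ℕ → ProbabilityMeasure (ℕ → A)}
    (hη : ∀ n, (η n : Measure (ℕ → A)) X = 1)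
    (hlim : Tendsto (fun n => orbitAverage (η n) n) U (𝓝 μ))
    (hpos : ∀ᶠ n in atTop, AEPos φ (η n : Measure (ℕ → A)) (n + 1)) {L D : ℝ}
    (hL : ∀ᶠ n : ℕ in atTop,
      ((n : ℝ) + 1) * L ≤ blockFreeEnergy a φ (η n : Measure (ℕ → A)) (n + 1) + D)
    {m : ℕ} (hm : m ≠ 0) :
    m * L ≤ blockFreeEnergy a φ (μ : Measure (ℕ → A)) m + Real.log c⁻¹ := by
  obtain ⟨K, hK⟩ := exists_mul_blockFreeEnergy_le (a := a) hX hφ ha hm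
  have hzero : Tendsto (fun n : ℕ => (K + m * D) * (1 / ((n : ℝ) + 1))) atTop (𝓝 0) := by
    simpa using (tendsto_one_div_add_atTop_nhds_zero_nat (𝕜 := ℝ)).const_mul (K + m * D)
  have hright := ((((continuous_blockFreeEnergy a φ m).tendsto μ).comp hlim).add_const
    (Real.log c⁻¹)).add (hzero.mono_left hU)
  rw [add_zero] at hright
  refine ge_of_tendsto hright (hU ?_)
  filter_upwards [hpos, hL, eventually_ge_atTop m] with n hposn hLn hmn
  have hn : (0 : ℝ) < (n : ℝ) + 1 := by positivity
  have hwindow := hK n (η n) (by omega) (hη n) hposn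
  have hscale := mul_le_mul_of_nonneg_left hLn (Nat.cast_nonneg m)
  refine le_of_mul_le_mul_left ?_ hn
  have herror : ((n : ℝ) + 1) * ((K + m * D) * (1 / ((n : ℝ) + 1))) = K + m * D := by field_simp
  rw [mul_add, herror, mul_left_comm]
  simp only [Function.comp_apply]
  linarith

end

end

/-! ### Fibre sums and the potential on the factor -/

theorem mem_cyl_iff {A : Type} {x : ℕ → A} {I : List A} : x ∈ cyl I ↔ wordOf x I.length = I := by
  conv_lhs => rw [← List.ofFn_get I, cyl_ofFn]
  conv_rhs => rhs; rw [← List.ofFn_get I]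
  exact List.ofFn_inj.symm

theorem IsSubshift.lang_of_append {A : Type} [TopologicalSpace A] {X : Set (ℕ → A)}
    (hX : IsSubshift X) {I J : List A} (h : Lang X (I ++ J)) : Lang X I ∧ Lang X J := by
  obtain ⟨x, hword, hx⟩ := h
  rw [mem_cyl_iff, List.length_append, wordOf_add] at hword
  obtain ⟨hI, hJ⟩ := List.append_inj hword (List.length_ofFn (f := initialWord I.length x))
  exact ⟨⟨x, mem_cyl_iff.2 hI, hx⟩,
    ⟨shiftMap^[I.length] x, mem_cyl_iff.2 hJ, hX.iterate_shiftMap_mem _ hx⟩⟩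

/-- `φ(I)^{1/a}`, extended by zero to words outside the language of `X`. -/
noncomputable def langWeight {A : Type} (X : Set (ℕ → A)) (φ : List A → ℝ) (a : ℝ)
    (I : List A) : ℝ :=
  if Lang X I then φ I ^ a⁻¹ else 0

/-- The words of length `n` lying over `J`. -/
noncomputable def wordFiber {A C : Type} [Fintype A] (π : A → C) {n : ℕ} (J : Fin n → C) :
    Finset (Fin n → A) :=
  Finset.univ.filter fun w => π ∘ w = J

/-- The sum in the definition of `φ^{(2)}(J)`, so that `φ^{(2)}(J) = fiberSum(J)^a`. -/
noncomputable def fiberSum {A C : Type} [Fintype A] (X : Set (ℕ → A)) (π : A → C)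
    (φ : List A → ℝ) (a : ℝ) {n : ℕ} (J : Fin n → C) : ℝ :=
  ∑ w ∈ wordFiber π J, langWeight X φ a (List.ofFn w)

section
variable {A C : Type} {X : Set (ℕ → A)} {φ : List A → ℝ} {a c : ℝ}

theorem IsSubmultOn.langWeight_nonneg (h : IsSubmultOn X φ c) (a : ℝ) (I : List A) :
    0 ≤ langWeight X φ a I := by
  unfold langWeight
  split_ifs with hI
  · exact Real.rpow_nonneg (h.nonneg I hI) _
  · exact le_rfl

theorem IsSubmultOn.langWeight_append_le [TopologicalSpace A] (hX : IsSubshift X)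
    (h : IsSubmultOn X φ c) (ha : 0 ≤ a) (I J : List A) :
    langWeight X φ a (I ++ J) ≤ (c⁻¹) ^ a⁻¹ * (langWeight X φ a I * langWeight X φ a J) := by
  by_cases hIJ : Lang X (I ++ J)
  · obtain ⟨hI, hJ⟩ := hX.lang_of_append hIJ
    have hc := inv_nonneg.2 h.pos.le
    rw [langWeight, langWeight, langWeight, if_pos hIJ, if_pos hI, if_pos hJ, ← mul_assoc,
      ← Real.mul_rpow hc (h.nonneg I hI),
      ← Real.mul_rpow (mul_nonneg hc (h.nonneg I hI)) (h.nonneg J hJ)]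
    exact Real.rpow_le_rpow (h.nonneg _ hIJ) (h.append_le I J hIJ) (inv_nonneg.2 ha)
  · rw [langWeight, if_neg hIJ]
    exact mul_nonneg (Real.rpow_nonneg (inv_nonneg.2 h.pos.le) _)
      (mul_nonneg (h.langWeight_nonneg a I) (h.langWeight_nonneg a J))

variable [Fintype A]

theorem mem_wordFiber {π : A → C} {n : ℕ} {J : Fin n → C} {w : Fin n → A} :
    w ∈ wordFiber π J ↔ π ∘ w = J := by
  simp [wordFiber]

theorem sum_wordFiber [Fintype C] (π : A → C) {n : ℕ} (f : (Fin n → A) → ℝ) :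
    ∑ J : Fin n → C, ∑ w ∈ wordFiber π J, f w = ∑ w, f w :=
  Finset.sum_fiberwise _ _ _

theorem IsSubmultOn.fiberSum_nonneg (h : IsSubmultOn X φ c) (π : A → C) (a : ℝ) {n : ℕ}
    (J : Fin n → C) : 0 ≤ fiberSum X π φ a J :=
  Finset.sum_nonneg fun _ _ => h.langWeight_nonneg a _

theorem phiTwo_ofFn (X : Set (ℕ → A)) (π : A → C) (φ : List A → ℝ) (a : ℝ) {n : ℕ}
    (J : Fin n → C) : phiTwo X π φ a (List.ofFn J) = fiberSum X π φ a J ^ a := by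
  have hlength : ∀ (I : List C) (n : ℕ), I.length = n → phiTwo X π φ a I =
      (∑ w : Fin n → A, if Lang X (List.ofFn w) ∧ List.map π (List.ofFn w) = I
        then φ (List.ofFn w) ^ a⁻¹ else 0) ^ a := by
    rintro I _ rfl
    rfl
  rw [hlength _ n List.length_ofFn, fiberSum, wordFiber, Finset.sum_filter]
  refine congrArg (· ^ a) (Finset.sum_congr rfl fun w _ => ?_)
  rw [langWeight, ← ite_and]
  exact if_congr (by rw [and_comm, List.map_ofFn, List.ofFn_inj]) rfl rfl

theorem wordFiber_append (π : A → C) {m n : ℕ} (J : Fin m → C) (J' : Fin n → C) :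
    wordFiber π (Fin.append J J') =
      (wordFiber π J ×ˢ wordFiber π J').map (Fin.appendEquiv m n).toEmbedding := by
  ext w
  obtain ⟨⟨u, v⟩, rfl⟩ := (Fin.appendEquiv m n).surjective w
  have hmap : π ∘ Fin.append u v = Fin.append (π ∘ u) (π ∘ v) := by
    funext i
    refine Fin.addCases (fun i => ?_) (fun i => ?_) i <;> simp
  have happend := (Fin.appendEquiv (α := C) m n).injective.eq_iff
    (a := (π ∘ u, π ∘ v)) (b := (J, J'))
  simp only [Fin.appendEquiv, Equiv.coe_fn_mk, Prod.mk.injEq] at happend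
  rw [Finset.mem_map_equiv, Equiv.symm_apply_apply, Finset.mem_product, mem_wordFiber,
    mem_wordFiber, mem_wordFiber, ← happend, ← hmap]
  rfl

theorem IsSubmultOn.fiberSum_append_le [TopologicalSpace A] (hX : IsSubshift X)
    (h : IsSubmultOn X φ c) (π : A → C) (ha : 0 ≤ a) {m n : ℕ} (J : Fin m → C) (J' : Fin n → C) :
    fiberSum X π φ a (Fin.append J J') ≤
      (c⁻¹) ^ a⁻¹ * (fiberSum X π φ a J * fiberSum X π φ a J') := by
  simp only [fiberSum, wordFiber_append, Finset.sum_map, Finset.sum_product]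
  rw [Finset.sum_mul_sum]
  simp only [Finset.mul_sum]
  refine Finset.sum_le_sum fun u _ => Finset.sum_le_sum fun v _ => ?_
  have hword : List.ofFn (Fin.append u v) = List.ofFn u ++ List.ofFn v := List.ofFn_fin_append u v
  exact (congrArg _ hword).trans_le (h.langWeight_append_le hX ha _ _)

theorem IsSubmultOn.phiTwo [TopologicalSpace A] (hX : IsSubshift X) (h : IsSubmultOn X φ c)
    (ha : 0 < a) (π : A → C) (Y : Set (ℕ → C)) : IsSubmultOn Y (phiTwo X π φ a) c where
  pos := h.pos
  le_one := h.le_one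
  nonneg I _ := by
    rw [← List.ofFn_get I, phiTwo_ofFn]
    exact Real.rpow_nonneg (h.fiberSum_nonneg π a _) _
  append_le I J _ := by
    have hc := Real.rpow_nonneg (inv_nonneg.2 h.pos.le) a⁻¹
    rw [← List.ofFn_get I, ← List.ofFn_get J, ← List.ofFn_fin_append, phiTwo_ofFn, phiTwo_ofFn,
      phiTwo_ofFn]
    refine (Real.rpow_le_rpow (h.fiberSum_nonneg π a _) (h.fiberSum_append_le hX π ha.le _ _)
      ha.le).trans_eq ?_
    rw [Real.mul_rpow hc (mul_nonneg (h.fiberSum_nonneg π a _) (h.fiberSum_nonneg π a _)),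
      Real.mul_rpow (h.fiberSum_nonneg π a _) (h.fiberSum_nonneg π a _),
      Real.rpow_inv_rpow (inv_nonneg.2 h.pos.le) ha.ne', mul_assoc]

theorem phiTwo_wordOf_pos (h : IsSubmultOn X φ c) (π : A → C) {x : ℕ → A}
    (hx : x ∈ X) {n : ℕ} (hpos : 0 < φ (wordOf x n)) :
    0 < phiTwo X π φ a (wordOf (blockMap π x) n) := by
  have hweight : 0 < langWeight X φ a (wordOf x n) := by
    rw [langWeight, if_pos (lang_wordOf hx n)]
    exact Real.rpow_pos_of_pos hpos _
  have hle : langWeight X φ a (wordOf x n) ≤ fiberSum X π φ a (π ∘ initialWord n x) :=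
    Finset.single_le_sum (f := fun w => langWeight X φ a (List.ofFn w))
      (fun _ _ => h.langWeight_nonneg a _) (mem_wordFiber.2 rfl)
  exact (Real.rpow_pos_of_pos (hweight.trans_le hle) a).trans_eq
    (phiTwo_ofFn X π φ a (π ∘ initialWord n x)).symm

end

/-! ### The relative variational principle -/

section
variable {A C : Type} [MeasurableSpace A] {X : Set (ℕ → A)} {φ : List A → ℝ} {a c : ℝ} {π : A → C}
  {n : ℕ}

theorem measureReal_eq_zero_of_not_lang {μ : Measure (ℕ → A)} (hμ : ∀ᵐ x ∂μ, x ∈ X)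
    {w : Fin n → A} (hw : ¬ Lang X (List.ofFn w)) : μ.real (initialWord n ⁻¹' {w}) = 0 := by
  have hnull : μ (initialWord n ⁻¹' {w}) = 0 :=
    measure_mono_null (fun x hx hxX => hw ⟨x, (cyl_ofFn w).ge hx, hxX⟩) hμ
  rw [measureReal_def, hnull, ENNReal.toReal_zero]

theorem aePos_iff_langWeight [Countable A] (h : IsSubmultOn X φ c) (ha : a ≠ 0)
    {μ : Measure (ℕ → A)} [IsFiniteMeasure μ] (hμ : ∀ᵐ x ∂μ, x ∈ X) : AEPos φ μ n ↔
      ∀ w : Fin n → A, langWeight X φ a (List.ofFn w) = 0 → μ.real (initialWord n ⁻¹' {w}) = 0 := by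
  refine (aePos_iff φ μ n).trans (forall_congr' fun w => ?_)
  by_cases hw : Lang X (List.ofFn w)
  · rw [langWeight, if_pos hw, Real.rpow_eq_zero (h.nonneg _ hw) (inv_ne_zero ha),
      (h.nonneg _ hw).ge_iff_eq']
  · simp only [measureReal_eq_zero_of_not_lang hμ hw, implies_true]

variable [Fintype A]

theorem blockFreeEnergy_eq_sum_langWeight [DiscreteMeasurableSpace A] (ha : a ≠ 0)
    {μ : Measure (ℕ → A)} [IsFiniteMeasure μ] (hμ : ∀ᵐ x ∂μ, x ∈ X) (hpos : AEPos φ μ n) :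
    blockFreeEnergy a φ μ n = a * ∑ w : Fin n → A,
      (μ.real (initialWord n ⁻¹' {w}) * Real.log (langWeight X φ a (List.ofFn w)) +
        Real.negMulLog (μ.real (initialWord n ⁻¹' {w}))) := by
  rw [blockFreeEnergy, blockEntropy, finEntropy, logIntegral_eq_sum, Finset.sum_add_distrib,
    mul_add, add_comm, Finset.mul_sum Finset.univ (fun w : Fin n → A => _ * Real.log _) a]
  refine congrArg (· + _) (Finset.sum_congr rfl fun w _ => ?_)
  rcases eq_or_ne (μ.real (initialWord n ⁻¹' {w})) 0 with hw | hw
  · rw [hw, zero_mul, zero_mul, mul_zero]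
  · have hφw : 0 < φ (List.ofFn w) := not_le.1 fun hle => hw ((aePos_iff φ μ n).1 hpos w hle)
    have hlang : Lang X (List.ofFn w) :=
      not_not.1 fun hlang => hw (measureReal_eq_zero_of_not_lang hμ hlang)
    rw [langWeight, if_pos hlang, Real.log_rpow hφw]
    field_simp

theorem measureReal_map_blockMap [DiscreteMeasurableSpace A] [Finite C] [MeasurableSpace C]
    [DiscreteMeasurableSpace C] (μ : Measure (ℕ → A)) [IsFiniteMeasure μ] (π : A → C)
    (J : Fin n → C) : (μ.map (blockMap π)).real (initialWord n ⁻¹' {J}) =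
      ∑ w ∈ wordFiber π J, μ.real (initialWord n ⁻¹' {w}) := by
  have hset : blockMap π ⁻¹' (initialWord n ⁻¹' {J}) =
      (initialWord n ⁻¹' (wordFiber π J) : Set (ℕ → A)) := by
    ext x
    simp only [Set.mem_preimage, Set.mem_singleton_iff, Finset.mem_coe, mem_wordFiber]
    rfl
  rw [map_measureReal_apply (measurable_blockMap π) (measurable_initialWord n .of_discrete), hset,
    sum_measureReal_preimage_singleton _ fun _ _ => measurable_initialWord n .of_discrete]

end

section
variable {A C : Type} [Fintype A] [MeasurableSpace C] {X : Set (ℕ → A)}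
  {φ : List A → ℝ} {a c : ℝ} {π : A → C} {n : ℕ}

theorem aePos_phiTwo_iff [Countable C] (h : IsSubmultOn X φ c) (ha : a ≠ 0) (ν : Measure (ℕ → C))
    [IsFiniteMeasure ν] : AEPos (phiTwo X π φ a) ν n ↔
      ∀ J : Fin n → C, fiberSum X π φ a J = 0 → ν.real (initialWord n ⁻¹' {J}) = 0 := by
  refine (aePos_iff _ ν n).trans (forall_congr' fun J => ?_)
  have hJ := h.fiberSum_nonneg π a J
  rw [phiTwo_ofFn, (Real.rpow_nonneg hJ a).ge_iff_eq', Real.rpow_eq_zero hJ ha]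

variable [DiscreteMeasurableSpace C]

theorem blockFreeEnergy_phiTwo [Fintype C] (h : IsSubmultOn X φ c) (ha : a ≠ 0)
    (ν : Measure (ℕ → C)) [IsFiniteMeasure ν] :
    blockFreeEnergy a (phiTwo X π φ a) ν n = a * ∑ J : Fin n → C,
      (ν.real (initialWord n ⁻¹' {J}) * Real.log (fiberSum X π φ a J) +
        Real.negMulLog (ν.real (initialWord n ⁻¹' {J}))) := by
  rw [blockFreeEnergy, blockEntropy, finEntropy, logIntegral_eq_sum, Finset.sum_add_distrib,
    mul_add, add_comm, Finset.mul_sum Finset.univ (fun J : Fin n → C => _ * Real.log _) a]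
  refine congrArg (· + _) (Finset.sum_congr rfl fun J _ => ?_)
  rw [phiTwo_ofFn, mul_left_comm]
  rcases (h.fiberSum_nonneg π a J).eq_or_lt with hJ | hJ
  · rw [← hJ, Real.zero_rpow ha, Real.log_zero, mul_zero, mul_zero, mul_zero]
  · rw [Real.log_rpow hJ]

variable [MeasurableSpace A] [DiscreteMeasurableSpace A]

theorem AEPos.map_phiTwo [Finite C] (h : IsSubmultOn X φ c) (a : ℝ) (π : A → C)
    {μ : Measure (ℕ → A)} (hμ : ∀ᵐ x ∂μ, x ∈ X) (hpos : AEPos φ μ n) :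
    AEPos (phiTwo X π φ a) (μ.map (blockMap π)) n := by
  refine (ae_map_iff (measurable_blockMap π).aemeasurable ?_).2 ?_
  · exact (Measurable.of_discrete.comp (measurable_initialWord n) : Measurable
      ((fun J => 0 < phiTwo X π φ a (List.ofFn J)) ∘ initialWord n)).setOf
  · filter_upwards [hμ, hpos] with x hx hφx using phiTwo_wordOf_pos h π hx hφx

theorem blockFreeEnergy_le_map_phiTwo [Fintype C] (h : IsSubmultOn X φ c) (ha : 0 < a) (π : A → C)
    {μ : Measure (ℕ → A)} [IsProbabilityMeasure μ] (hμ : ∀ᵐ x ∂μ, x ∈ X) (hpos : AEPos φ μ n) :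
    blockFreeEnergy a φ μ n ≤ blockFreeEnergy a (phiTwo X π φ a) (μ.map (blockMap π)) n := by
  rw [blockFreeEnergy_eq_sum_langWeight ha.ne' hμ hpos, blockFreeEnergy_phiTwo h ha.ne',
    ← sum_wordFiber π]
  refine mul_le_mul_of_nonneg_left (Finset.sum_le_sum fun J _ => ?_) ha.le
  rw [measureReal_map_blockMap]
  exact sum_mul_log_add_negMulLog_le (fun _ _ => measureReal_nonneg)
    (fun w _ => h.langWeight_nonneg a _)
    fun w _ => (aePos_iff_langWeight h ha.ne' hμ).1 hpos w

end

section
variable {A C : Type} [Fintype A] [TopologicalSpace A] [DiscreteTopology A] [MeasurableSpace A]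
  [BorelSpace A] {X : Set (ℕ → A)} {φ : List A → ℝ} {a c : ℝ} {n : ℕ}

theorem IsSubshift.exists_measureReal_initialWord_eq (hX : IsSubshift X) {p : (Fin n → A) → ℝ}
    (hp : ∀ w, 0 ≤ p w) (hlang : ∀ w, ¬ Lang X (List.ofFn w) → p w = 0) (hsum : ∑ w, p w = 1) :
    ∃ η : ProbabilityMeasure (ℕ → A), (η : Measure (ℕ → A)) X = 1 ∧
      ∀ w, (η : Measure (ℕ → A)).real (initialWord n ⁻¹' {w}) = p w := by
  have hrep : ∀ w : Fin n → A, ∃ x ∈ X, Lang X (List.ofFn w) → initialWord n x = w := by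
    intro w
    by_cases hw : Lang X (List.ofFn w)
    · obtain ⟨x, hxw, hx⟩ := hw
      exact ⟨x, hx, fun _ => (cyl_ofFn w).le hxw⟩
    · exact hX.1.imp fun y hy => ⟨hy, fun hw' => absurd hw' hw⟩
  choose x hxX hxw using hrep
  have hsum' : ∑ w, ENNReal.ofReal (p w) = 1 := by
    rw [← ENNReal.ofReal_sum_of_nonneg fun w _ => hp w, hsum, ENNReal.ofReal_one]
  set q : PMF (Fin n → A) := PMF.ofFintype _ hsum'
  have hx : Measurable x := .of_discrete
  refine ⟨⟨q.toMeasure.map x, Measure.isProbabilityMeasure_map hx.aemeasurable⟩, ?_, fun w => ?_⟩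
  · rw [ProbabilityMeasure.coe_mk, Measure.map_apply hx hX.measurableSet,
      Set.eq_univ_of_forall (s := x ⁻¹' X) hxX, measure_univ]
  · have hpre : q.toMeasure (x ⁻¹' (initialWord n ⁻¹' {w})) = q.toMeasure {w} := by
      simp only [PMF.toMeasure_apply_fintype]
      refine Finset.sum_congr rfl fun v _ => ?_
      by_cases hv : Lang X (List.ofFn v)
      · simp [Set.indicator, hxw v hv]
      · have hqv : q v = 0 := by rw [PMF.ofFintype_apply, hlang v hv, ENNReal.ofReal_zero]
        simp only [Set.indicator, hqv, ite_self]
    rw [ProbabilityMeasure.coe_mk, measureReal_def,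
      Measure.map_apply hx (measurable_initialWord n (.singleton w)), hpre,
      PMF.toMeasure_apply_singleton _ _ (.singleton w), PMF.ofFintype_apply,
      ENNReal.toReal_ofReal (hp w)]

variable [Fintype C] [MeasurableSpace C] [DiscreteMeasurableSpace C]

-- The optimal lift spreads the mass of `J` over the words above it in proportion to `langWeight`.
theorem exists_blockFreeEnergy_eq_phiTwo (hX : IsSubshift X) (h : IsSubmultOn X φ c) (ha : a ≠ 0)
    (π : A → C) {ν : Measure (ℕ → C)} [IsProbabilityMeasure ν]
    (hpos : AEPos (phiTwo X π φ a) ν n) :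
    ∃ η : ProbabilityMeasure (ℕ → A), (η : Measure (ℕ → A)) X = 1 ∧
      (∀ J, ((η : Measure (ℕ → A)).map (blockMap π)).real (initialWord n ⁻¹' {J}) =
        ν.real (initialWord n ⁻¹' {J})) ∧
      AEPos φ (η : Measure (ℕ → A)) n ∧
      blockFreeEnergy a φ (η : Measure (ℕ → A)) n =
        blockFreeEnergy a (phiTwo X π φ a) ν n := by
  set P : (Fin n → C) → ℝ := fun J => ν.real (initialWord n ⁻¹' {J})
  set q : (Fin n → A) → ℝ := fun w => langWeight X φ a (List.ofFn w)
  set p : (Fin n → A) → ℝ := fun w => P (π ∘ w) * (q w / fiberSum X π φ a (π ∘ w)) with hp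
  have hP0 : ∀ J, fiberSum X π φ a J = 0 → P J = 0 := (aePos_phiTwo_iff h ha ν).1 hpos
  have hp_fiber : ∀ J, ∀ w ∈ wordFiber π J, p w = P J * (q w / fiberSum X π φ a J) := by
    rintro J w hw
    simp only [hp, mem_wordFiber.1 hw]
  have hp_zero : ∀ w, q w = 0 → p w = 0 := fun w hw => by
    simp only [hp, hw, zero_div, mul_zero]
  have hp_sum : ∀ J, ∑ w ∈ wordFiber π J, p w = P J := by
    intro J
    rw [Finset.sum_congr rfl (hp_fiber J), ← Finset.mul_sum, ← Finset.sum_div]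
    exact mul_div_cancel_of_imp (hP0 J) ▸ mul_div_assoc .. |>.symm
  have hp_one : ∑ w, p w = 1 := by
    rw [← sum_wordFiber π, Finset.sum_congr rfl fun J _ => hp_sum J]
    exact sum_measureReal_fiber ν (measurable_initialWord n)
  obtain ⟨η, hη, hηp⟩ := hX.exists_measureReal_initialWord_eq
    (fun w => mul_nonneg measureReal_nonneg
      (div_nonneg (h.langWeight_nonneg a _) (h.fiberSum_nonneg π a _)))
    (fun w hw => hp_zero w (if_neg hw)) hp_one
  have hηX := hX.ae_mem hη
  have hηpos : AEPos φ (η : Measure (ℕ → A)) n :=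
    (aePos_iff_langWeight h ha hηX).2 fun w hw => (hηp w).trans (hp_zero w hw)
  refine ⟨η, hη, fun J => ?_, hηpos, ?_⟩
  · rw [measureReal_map_blockMap, Finset.sum_congr rfl fun w _ => hηp w, hp_sum]
  · rw [blockFreeEnergy_eq_sum_langWeight ha hηX hηpos, blockFreeEnergy_phiTwo h ha,
      ← sum_wordFiber π]
    refine congrArg (a * ·) (Finset.sum_congr rfl fun J _ => ?_)
    refine .trans (Finset.sum_congr rfl fun w hw => ?_)
      (sum_mul_log_add_negMulLog_proportional (hP0 J))
    rw [(hηp w).trans (hp_fiber J w hw)]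
    rfl

end

section
variable {A C : Type} [MeasurableSpace A] [MeasurableSpace C]

theorem orbitAverage_pushPM [DiscreteMeasurableSpace A] (π : A → C)
    (η : ProbabilityMeasure (ℕ → A)) (n : ℕ) :
    orbitAverage (pushPM π η) n = pushPM π (orbitAverage η n) := by
  have hπ := measurable_blockMap π
  refine Subtype.ext ?_
  change ((n + 1 : ℕ) : ℝ≥0∞)⁻¹ • ∑ i ∈ Finset.range (n + 1),
      ((η : Measure (ℕ → A)).map (blockMap π)).map shiftMap^[i] =
    (((n + 1 : ℕ) : ℝ≥0∞)⁻¹ • ∑ i ∈ Finset.range (n + 1),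
      (η : Measure (ℕ → A)).map shiftMap^[i]).map (blockMap π)
  simp only [map_blockMap_map_iterate]
  simp only [← Measure.mapₗ_apply_of_measurable hπ, map_smul, map_sum]

end

/-- `Φ_*(μ) + a h_μ`, the part of the weighted pressure that depends on `μ` alone and not just on
its image under the first factor map. -/
noncomputable def pressure {A : Type} [Fintype A] [MeasurableSpace A] (X : Set (ℕ → A)) (a : ℝ)
    (φ : ℕ → (ℕ → A) → ℝ) (μ : ProbabilityMeasure (ℕ → A)) : EReal :=
  PhiStar (μ : Measure (ℕ → A)) φ + ((a * ent X (μ : Measure (ℕ → A)) : ℝ) : EReal)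

section
variable {A : Type} [Fintype A] [TopologicalSpace A] [DiscreteTopology A] [MeasurableSpace A]
  [BorelSpace A] {X : Set (ℕ → A)} {φ : List A → ℝ} {a c : ℝ} {μ : ProbabilityMeasure (ℕ → A)}

theorem coe_le_pressure_iff (hX : IsSubshift X) (h : IsSubmultOn X φ c) (ha : 0 ≤ a)
    (hμ : μ ∈ MInv X) (r : ℝ) : (r : EReal) ≤ pressure X a (genPot φ) μ ↔
      (∀ n, AEPos φ (μ : Measure (ℕ → A)) n) ∧ ∀ n : ℕ, n ≠ 0 →
        n * r ≤ blockFreeEnergy a φ (μ : Measure (ℕ → A)) n + Real.log c⁻¹ := by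
  have hmap : (μ : Measure (ℕ → A)).map (blockMap id) = μ := Measure.map_id
  have hpressure : pressure X a (genPot φ) μ =
      weightedPressure (fun _ : Unit => id) (fun _ => X) .univ (fun _ => a) (genPot φ) μ := by
    simp only [pressure, weightedPressure, hmap, Finset.sum_const, Finset.card_univ,
      Fintype.card_unit, one_smul]
  have hblock : ∀ n, blockPressure (fun _ : Unit => id) .univ (fun _ => a) φ c μ n =
      blockFreeEnergy a φ μ n + Real.log c⁻¹ := fun n => by
    simp only [blockPressure, weightedBlockEntropy, blockFreeEnergy, hmap, Finset.sum_const,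
      Finset.card_univ, Fintype.card_unit, one_smul]
    ring
  have hfam : IsWeightedFamily X (fun _ : Unit => id) (fun _ => X) .univ (fun _ => a) :=
    ⟨hX, fun _ _ => hX, fun _ _ => Set.mapsTo_id X, fun _ _ => ha⟩
  rw [hpressure, hfam.coe_le_weightedPressure_iff h hμ]
  simp only [hblock]

theorem pressure_eq_bot (hX : IsSubshift X) (h : IsSubmultOn X φ c) (hμ : μ ∈ MInv X)
    (hpos : ¬ ∀ n, AEPos φ (μ : Measure (ℕ → A)) n) : pressure X a (genPot φ) μ = ⊥ := by
  rw [pressure, PhiStar_eq_bot_of_not_aePos hX h hμ hpos, EReal.bot_add]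

end

section
variable {A C : Type} [Fintype A] [TopologicalSpace A] [DiscreteTopology A] [MeasurableSpace A]
  [BorelSpace A] [Fintype C] [TopologicalSpace C] [DiscreteTopology C] [MeasurableSpace C]
  [BorelSpace C] {X : Set (ℕ → A)} {Y : Set (ℕ → C)} {π : A → C} {φ : List A → ℝ} {a c : ℝ}

theorem pressure_le_pressure_pushPM (hX : IsSubshift X) (hY : IsSubshift Y)
    (h : IsSubmultOn X φ c) (ha : 0 < a) (hπ : Set.MapsTo (blockMap π) X Y)
    {μ : ProbabilityMeasure (ℕ → A)} (hμ : μ ∈ MInv X) :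
    pressure X a (genPot φ) μ ≤ pressure Y a (genPot (phiTwo X π φ a)) (pushPM π μ) := by
  have hμX := hX.ae_mem hμ.2
  refine EReal.ge_of_forall_gt_iff_ge.1 fun r hr => ?_
  obtain ⟨hpos, hr⟩ := (coe_le_pressure_iff hX h ha.le hμ r).1 hr.le
  refine (coe_le_pressure_iff hY (h.phiTwo hX ha π Y) ha.le
    (pushPM_mem_MInv hμ hY.measurableSet hπ) r).2 ⟨fun n => (hpos n).map_phiTwo h a π hμX, ?_⟩
  exact fun n hn => (hr n hn).trans
    (add_le_add_left (blockFreeEnergy_le_map_phiTwo h ha π hμX (hpos n)) _)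

theorem exists_pushPM_eq_of_aePos (hX : IsSubshift X) (hY : IsSubshift Y)
    (h : IsSubmultOn X φ c) (ha : 0 < a) {ν : ProbabilityMeasure (ℕ → C)} (hν : ν ∈ MInv Y)
    (hpos : ∀ n, AEPos (phiTwo X π φ a) (ν : Measure (ℕ → C)) n) :
    ∃ μ ∈ MInv X, pushPM π μ = ν ∧
      pressure Y a (genPot (phiTwo X π φ a)) ν ≤ pressure X a (genPot φ) μ := by
  choose η hηX hην hηpos hηenergy using
    fun n => exists_blockFreeEnergy_eq_phiTwo hX h ha.ne' π (hpos (n + 1))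
  obtain ⟨μ, hμ, U, hU, hlim⟩ := exists_tendsto_orbitAverage hX η hηX
  refine ⟨μ, hμ, Subtype.ext ?_, ?_⟩
  · have hlim' : Tendsto (fun n => orbitAverage (pushPM π (η n)) n) U (𝓝 (pushPM π μ)) := by
      simp only [orbitAverage_pushPM]
      exact ((continuous_pushPM π).tendsto μ).comp hlim
    refine ext_of_initialWord (μ := (pushPM π μ : Measure (ℕ → C))) (ν := (ν : Measure (ℕ → C)))
      fun m J => measureReal_initialWord_of_tendsto_orbitAverage hU hlim' measureReal_nonneg
        measureReal_le_one (.of_forall fun n i hi => ?_)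
    exact (measureReal_map_iterate_eq (hην n) hi J).trans
      (by rw [map_iterate_shiftMap hν.1])
  · refine EReal.ge_of_forall_gt_iff_ge.1 fun r hr => ?_
    obtain ⟨-, hr⟩ := (coe_le_pressure_iff hY (h.phiTwo hX ha π Y) ha.le hν r).1 hr.le
    have hηpos' := Eventually.of_forall (f := atTop) hηpos
    refine (coe_le_pressure_iff hX h ha.le hμ r).2
      ⟨fun n => aePos_of_tendsto_orbitAverage hX h hU hηX hlim hηpos' n, fun m hm => ?_⟩
    refine le_blockFreeEnergy_of_tendsto_orbitAverage (D := Real.log c⁻¹) hX h ha.le hU hηX hlim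
      hηpos' (.of_forall fun n => ?_) hm
    rw [hηenergy]
    exact_mod_cast hr (n + 1) n.succ_ne_zero

theorem exists_pushPM_eq (hX : IsSubshift X) (hY : IsSubshift Y) (h : IsSubmultOn X φ c)
    (ha : 0 < a) (hπ : Set.SurjOn (blockMap π) X Y) {ν : ProbabilityMeasure (ℕ → C)}
    (hν : ν ∈ MInv Y) : ∃ μ ∈ MInv X, pushPM π μ = ν ∧
      pressure Y a (genPot (phiTwo X π φ a)) ν ≤ pressure X a (genPot φ) μ := by
  by_cases hpos : ∀ n, AEPos (phiTwo X π φ a) (ν : Measure (ℕ → C)) n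
  · exact exists_pushPM_eq_of_aePos hX hY h ha hν hpos
  · -- The inequality is void, and any lift will do: take one for the zero potential.
    have hone : IsSubmultOn X (fun _ => 1) 1 :=
      ⟨one_pos, le_rfl, fun _ _ => zero_le_one, fun _ _ _ => by norm_num⟩
    obtain ⟨μ, hμ, hμν, -⟩ := exists_pushPM_eq_of_aePos hX hY hone ha hν fun n => by
      filter_upwards [hY.ae_mem hν.2] with y hy
      obtain ⟨x, hx, rfl⟩ := hπ hy
      exact phiTwo_wordOf_pos hone π hx one_pos
    exact ⟨μ, hμ, hμν, (pressure_eq_bot hY (h.phiTwo hX ha π Y) hν hpos).trans_le bot_le⟩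

end

/-! ### Rescaled potentials -/

theorem intlog_rpow {Ω : Type*} [MeasurableSpace Ω] {μ : Measure Ω} {g : Ω → ℝ} {c : ℝ}
    (hc : 0 < c) (hg : ∀ᵐ x ∂μ, 0 ≤ g x) : intlog μ (fun x => g x ^ c) = c * intlog μ g := by
  have hlog : ∀ᵐ x ∂μ, Real.log (g x ^ c) = c * Real.log (g x) ∧ (g x ^ c ≤ 0 ↔ g x ≤ 0) := by
    filter_upwards [hg] with x hx
    rcases hx.eq_or_lt with hx | hx
    · simp [← hx, Real.zero_rpow hc.ne']
    · exact ⟨Real.log_rpow hx c, by simp [hx.not_ge, (Real.rpow_pos_of_pos hx c).not_ge]⟩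
  have hpos : ∫⁻ x, ENNReal.ofReal (Real.log (g x ^ c)) ∂μ =
      ENNReal.ofReal c * ∫⁻ x, ENNReal.ofReal (Real.log (g x)) ∂μ := by
    rw [← lintegral_const_mul' _ _ ENNReal.ofReal_ne_top]
    refine lintegral_congr_ae (hlog.mono fun x hx => ?_)
    simp only [hx.1, ENNReal.ofReal_mul hc.le]
  have hneg : ∫⁻ x, (if g x ^ c ≤ 0 then ⊤ else ENNReal.ofReal (-Real.log (g x ^ c))) ∂μ =
      ENNReal.ofReal c * ∫⁻ x, (if g x ≤ 0 then ⊤ else ENNReal.ofReal (-Real.log (g x))) ∂μ := by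
    rw [← lintegral_const_mul' _ _ ENNReal.ofReal_ne_top]
    refine lintegral_congr_ae (hlog.mono fun x hx => ?_)
    simp only [hx.1, hx.2, ← mul_neg, ENNReal.ofReal_mul hc.le]
    split_ifs
    · exact (ENNReal.mul_top (ENNReal.ofReal_pos.2 hc).ne').symm
    · rfl
  rw [intlog, hpos, hneg, EReal.coe_ennreal_mul, EReal.coe_ennreal_mul, EReal.coe_ennreal_ofReal,
    max_eq_left hc.le, ← EReal.mul_sub_of_nonneg_of_ne_top (EReal.coe_nonneg.2 hc.le)
      (EReal.coe_ne_top c)]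
  rfl

theorem PhiStar_scPot {A : Type} [MeasurableSpace A] {μ : Measure (ℕ → A)}
    {φ : ℕ → (ℕ → A) → ℝ} {c : ℝ} (hc : 0 < c) (hφ : ∀ n, ∀ᵐ x ∂μ, 0 ≤ φ n x) :
    PhiStar μ (scPot c φ) = c * PhiStar μ φ := by
  unfold PhiStar
  rw [← EReal.liminf_const_mul_of_nonneg_of_ne_top (EReal.coe_nonneg.2 hc.le) (EReal.coe_ne_top c)]
  refine congrArg (liminf · atTop) (funext fun n => ?_)
  rw [mul_left_comm, ← intlog_rpow hc (hφ n)]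
  rfl

theorem eqVal_scPot {A : Type} [Fintype A] [MeasurableSpace A] (X : Set (ℕ → A))
    {φ : ℕ → (ℕ → A) → ℝ} {a : ℝ} (ha : 0 < a) {μ : ProbabilityMeasure (ℕ → A)}
    (hφ : ∀ n, ∀ᵐ x ∂(μ : Measure (ℕ → A)), 0 ≤ φ n x) :
    eqVal X (scPot a⁻¹ φ) μ = pressure X a φ μ / a := by
  have ha' := inv_pos.2 ha
  rw [eqVal, PhiStar_scPot ha' hφ, EReal.div_eq_inv_mul, ← EReal.coe_inv, pressure,
    EReal.left_distrib_of_nonneg_of_ne_top (EReal.coe_nonneg.2 ha'.le) (EReal.coe_ne_top _),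
    ← EReal.coe_mul, inv_mul_cancel_left₀ ha.ne']

theorem coe_eq_pushM_iff {A C : Type} [MeasurableSpace A] [DiscreteMeasurableSpace A]
    [MeasurableSpace C] {π : A → C} {μ : ProbabilityMeasure (ℕ → A)}
    {ν : ProbabilityMeasure (ℕ → C)} :
    (ν : Measure (ℕ → C)) = pushM π μ ↔ ν = pushPM π μ :=
  (Subtype.ext_iff (a1 := ν) (a2 := pushPM π μ)).symm

section
variable {A C : Type} [Fintype A] [TopologicalSpace A] [DiscreteTopology A] [MeasurableSpace A]
  [BorelSpace A] [MeasurableSpace C] {X : Set (ℕ → A)} {π : A → C}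
  {φ : List A → ℝ} {a c : ℝ}

theorem condEqSet_scPot_eq_argmaxOn (hX : IsSubshift X) (h : IsSubmultOn X φ c) (ha : 0 < a)
    (ν : ProbabilityMeasure (ℕ → C)) :
    CondEqSet X π (scPot a⁻¹ (genPot φ)) (ν : Measure (ℕ → C)) =
      argmaxOn (pressure X a (genPot φ)) {η ∈ MInv X | pushPM π η = ν} := by
  have hfiber : ∀ η, η ∈ MInv X ∧ pushM π η = ν ↔ η ∈ {η ∈ MInv X | pushPM π η = ν} :=
    fun η => and_congr_right fun _ => eq_comm.trans (coe_eq_pushM_iff.trans eq_comm)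
  have heqVal : ∀ η ∈ MInv X, eqVal X (scPot a⁻¹ (genPot φ)) η = pressure X a (genPot φ) η / a :=
    fun η hη => eqVal_scPot X ha fun n => (hX.ae_mem hη.2).mono fun x hx =>
      h.nonneg _ (lang_wordOf hx n)
  have hdiv := EReal.strictMono_div_right_of_pos (EReal.coe_pos.2 ha) (EReal.coe_ne_top a)
  simp only [CondEqSet, ← and_assoc, hfiber]
  rw [Set.ofPred_mem_eq, setOf_eq_biSup]
  refine Set.ext fun μ => and_congr_right fun hμ => forall₂_congr fun η hη => ?_
  simp only [Set.mem_ofPred_eq, heqVal η hη.1, heqVal μ hμ.1]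
  exact hdiv.le_iff_le

end

/-! ### Maximization along a factor map -/

/-- `G ν` is the maximum of `F` over the fibre of `p : M → N` above `ν`, for each `ν ∈ N`. -/
structure IsFiberMax {α β γ : Type*} [LE γ] (M : Set α) (N : Set β) (p : α → β) (F : α → γ)
    (G : β → γ) : Prop where
  mapsTo : Set.MapsTo p M N
  le : ∀ μ ∈ M, F μ ≤ G (p μ)
  exists_ge : ∀ ν ∈ N, ∃ μ ∈ M, p μ = ν ∧ G ν ≤ F μ

namespace IsFiberMax
variable {α β : Type*} {M : Set α} {N : Set β} {p : α → β} {F : α → EReal} {G : β → EReal}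
  {R : β → ℝ}

theorem mem_argmaxOn_iff (h : IsFiberMax M N p F G) {μ : α} :
    μ ∈ argmaxOn F {x ∈ M | p x = p μ} ↔ μ ∈ M ∧ F μ = G (p μ) := by
  refine ⟨fun ⟨hμ, hmax⟩ => ⟨hμ.1, (h.le μ hμ.1).antisymm ?_⟩, fun ⟨hμ, heq⟩ => ⟨⟨hμ, rfl⟩, ?_⟩⟩
  · obtain ⟨x, hx, hxμ, hle⟩ := h.exists_ge (p μ) (h.mapsTo hμ.1)
    exact hle.trans (hmax ⟨hx, hxμ⟩)
  · exact fun x hx => (h.le x hx.1).trans_eq (by rw [hx.2, heq])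

theorem mem_argmaxOn_add_iff (h : IsFiberMax M N p F G) {μ : α} :
    μ ∈ argmaxOn (fun x => F x + R (p x)) M ↔
      μ ∈ argmaxOn F {x ∈ M | p x = p μ} ∧ p μ ∈ argmaxOn (fun y => G y + R y) N := by
  have hcancel : ∀ r : ℝ, ∀ {x y : EReal}, x + r ≤ y + r ↔ x ≤ y :=
    fun r => (EReal.addLECancellable_coe r).add_le_add_iff_right
  rw [h.mem_argmaxOn_iff]
  constructor
  · rintro ⟨hμ, hmax⟩
    have hle : ∀ ν ∈ N, G ν + R ν ≤ F μ + R (p μ) := fun ν hν => by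
      obtain ⟨x, hx, rfl, hGF⟩ := h.exists_ge ν hν
      exact ((hcancel _).2 hGF).trans (hmax hx)
    have heq := (h.le μ hμ).antisymm ((hcancel _).1 (hle _ (h.mapsTo hμ)))
    exact ⟨⟨hμ, heq⟩, h.mapsTo hμ, fun ν hν => (hle ν hν).trans_eq (by rw [heq])⟩
  · rintro ⟨⟨hμ, heq⟩, -, hmax⟩
    exact ⟨hμ, fun x hx => ((hcancel _).2 (h.le x hx)).trans
      ((hmax (h.mapsTo hx)).trans_eq (by simp only [heq]))⟩

theorem exists_mem_argmaxOn_add (h : IsFiberMax M N p F G) {ν : β}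
    (hν : ν ∈ argmaxOn (fun y => G y + R y) N) :
    ∃ μ ∈ argmaxOn (fun x => F x + R (p x)) M, p μ = ν := by
  obtain ⟨μ, hμ, rfl, hle⟩ := h.exists_ge ν hν.1
  exact ⟨μ, h.mem_argmaxOn_add_iff.2
    ⟨h.mem_argmaxOn_iff.2 ⟨hμ, (h.le μ hμ).antisymm hle⟩, hν⟩, rfl⟩

theorem exists_argmaxOn_eq_singleton_iff {A : Type} [Finite A] [TopologicalSpace A]
    [DiscreteTopology A] [MeasurableSpace A] [BorelSpace A]
    {M : Set (ProbabilityMeasure (ℕ → A))} {p : ProbabilityMeasure (ℕ → A) → β}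
    {F : ProbabilityMeasure (ℕ → A) → EReal} (h : IsFiberMax M N p F G)
    {S : Set (ProbabilityMeasure (ℕ → A))} (hS : S = argmaxOn (fun x => F x + R (p x)) M)
    (hne : S.Nonempty) (hcompact : IsCompact S) (hconvex : ConvexPM S)
    (herg : ∀ μ, IsExtremePM S μ → Ergodic shiftMap (μ : Measure (ℕ → A))) :
    (∃ μ, S = {μ}) ↔ ∃ ν, argmaxOn (fun y => G y + R y) N = {ν} ∧
      ∃! ρ : ProbabilityMeasure (ℕ → A),
        ρ ∈ argmaxOn F {x ∈ M | p x = ν} ∧ Ergodic shiftMap (ρ : Measure (ℕ → A)) := by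
  have hmem : ∀ {μ}, μ ∈ S ↔
      μ ∈ argmaxOn F {x ∈ M | p x = p μ} ∧ p μ ∈ argmaxOn (fun y => G y + R y) N := by
    rw [hS]; exact h.mem_argmaxOn_add_iff
  constructor
  · rintro ⟨μ, hμ⟩
    have hμS : μ ∈ S := hμ.symm ▸ rfl
    have huniq : ∀ {η}, η ∈ S → η = μ := by simp only [hμ, Set.mem_singleton_iff, imp_self,
      implies_true]
    have hext : IsExtremePM S μ :=
      ⟨hμS, fun μ₁ h₁ μ₂ h₂ _ _ _ _ => (huniq h₁).trans (huniq h₂).symm⟩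
    obtain ⟨hμF, hμG⟩ := hmem.1 hμS
    refine ⟨p μ, Set.eq_singleton_iff_unique_mem.2 ⟨hμG, fun ν hν => ?_⟩, μ,
      ⟨hμF, herg μ hext⟩, fun ρ ⟨hρ, _⟩ => huniq (hmem.2 ?_)⟩
    · obtain ⟨η, hη, rfl⟩ := h.exists_mem_argmaxOn_add hν
      exact congrArg p (huniq (hS.ge hη))
    · rw [hρ.1.2]
      exact ⟨hρ, hμG⟩
  · rintro ⟨ν, hν, ρ, -, huniq⟩
    refine ⟨ρ, hne.subset_singleton_iff.1 (eq_of_forall_isExtremePM_eq hcompact hconvex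
      fun μ hμ => huniq μ ⟨?_, herg μ hμ⟩)⟩
    obtain ⟨hμF, hμG⟩ := hmem.1 hμ.1
    rw [hν] at hμG
    rwa [show p μ = ν from hμG] at hμF

end IsFiberMax

theorem isFiberMax_pressure {A C : Type} [Fintype A] [TopologicalSpace A] [DiscreteTopology A]
    [MeasurableSpace A] [BorelSpace A] [Fintype C] [TopologicalSpace C] [DiscreteTopology C]
    [MeasurableSpace C] [BorelSpace C] {X : Set (ℕ → A)} {Y : Set (ℕ → C)} {π : A → C}
    {φ : List A → ℝ} {a c : ℝ} (hX : IsSubshift X) (hY : IsSubshift Y) (h : IsSubmultOn X φ c)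
    (ha : 0 < a) (hπ : Set.MapsTo (blockMap π) X Y) (hsurj : Set.SurjOn (blockMap π) X Y) :
    IsFiberMax (MInv X) (MInv Y) (pushPM π) (pressure X a (genPot φ))
      (pressure Y a (genPot (phiTwo X π φ a))) where
  mapsTo _ hμ := pushPM_mem_MInv hμ hY.measurableSet hπ
  le _ hμ := pressure_le_pressure_pushPM hX hY h ha hπ hμ
  exists_ge _ hν := exists_pushPM_eq hX hY h ha hsurj hν

/-! ### Chains of factor maps -/

section
variable {B : ℕ → Type} {X : ∀ i, Set (ℕ → B i)} {π : ∀ i, B i → B (i + 1)} {j k : ℕ}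

theorem mapsTo_blockMap_tauFrom
    (hπ : ∀ i, i + 1 < k → Set.MapsTo (blockMap (π (j + i))) (X (j + i)) (X (j + i + 1))) :
    ∀ i < k, Set.MapsTo (blockMap (tauFrom π j i)) (X j) (X (j + i))
  | 0, _ => fun _ hx => hx
  | i + 1, hi => (hπ i hi).comp (mapsTo_blockMap_tauFrom hπ i (Nat.lt_of_succ_lt hi))

theorem isWeightedFamily_tauFrom [∀ i, TopologicalSpace (B i)] {w : ℕ → ℝ} (hk : 0 < k)
    (hX : ∀ i < k, IsSubshift (X (j + i)))
    (hπ : ∀ i, i + 1 < k → Set.MapsTo (blockMap (π (j + i))) (X (j + i)) (X (j + i + 1)))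
    (hw : ∀ i < k, 0 ≤ w i) :
    IsWeightedFamily (X j) (tauFrom π j) (fun i => X (j + i)) (Finset.range k) w where
  source := hX 0 hk
  target i hi := hX i (Finset.mem_range.1 hi)
  mapsTo i hi := mapsTo_blockMap_tauFrom hπ i (Finset.mem_range.1 hi)
  weight_nonneg i hi := hw i (Finset.mem_range.1 hi)

theorem tauFrom_succ_heq (π : ∀ i, B i → B (i + 1)) (j i : ℕ) (x : B j) :
    HEq (tauFrom π j (i + 1) x) (tauFrom π (j + 1) i (π j x)) := by
  have hcongr : ∀ {m n : ℕ} {x : B m} {y : B n}, m = n → HEq x y → HEq (π m x) (π n y) := by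
    rintro m _ x y rfl hxy
    rw [eq_of_heq hxy]
  induction i with
  | zero => exact HEq.rfl
  | succ i ih => exact hcongr (by omega) ih

variable [∀ i, Fintype (B i)] [∀ i, MeasurableSpace (B i)]

theorem ent_map_tauFrom_succ [∀ i, DiscreteMeasurableSpace (B i)] (X : ∀ i, Set (ℕ → B i))
    (π : ∀ i, B i → B (i + 1)) (j i : ℕ) (μ : Measure (ℕ → B j)) :
    ent (X (j + (i + 1))) (μ.map (blockMap (tauFrom π j (i + 1)))) =
      ent (X (j + 1 + i)) ((μ.map (blockMap (π j))).map (blockMap (tauFrom π (j + 1) i))) := by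
  have hcongr : ∀ {m n : ℕ} {f : B j → B m} {g : B j → B n}, m = n → (∀ x, HEq (f x) (g x)) →
      ent (X m) (μ.map (blockMap f)) = ent (X n) (μ.map (blockMap g)) := by
    rintro m _ f g rfl hfg
    rw [funext fun x => eq_of_heq (hfg x)]
  rw [Measure.map_map (measurable_blockMap _) (measurable_blockMap _)]
  exact hcongr (f := tauFrom π j (i + 1)) (g := tauFrom π (j + 1) i ∘ π j) (by omega)
    (tauFrom_succ_heq π j i)

/-- The weighted entropy `∑_{i < k} wᵢ h_{τᵢ μ}` along the chain that starts at `X j`. -/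
noncomputable def weightedEntropy (π : ∀ i, B i → B (i + 1)) (X : ∀ i, Set (ℕ → B i)) (j k : ℕ)
    (w : ℕ → ℝ) (μ : Measure (ℕ → B j)) : ℝ :=
  ∑ i ∈ Finset.range k, w i * ent (X (j + i)) (μ.map (blockMap (tauFrom π j i)))

theorem weightedEntropy_succ (π : ∀ i, B i → B (i + 1)) (X : ∀ i, Set (ℕ → B i)) (j k : ℕ)
    (w : ℕ → ℝ) (μ : Measure (ℕ → B j)) :
    weightedEntropy π X j (k + 1) w μ = w 0 * ent (X j) μ +
      ∑ i ∈ Finset.range k,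
        w (i + 1) * ent (X (j + (i + 1))) (μ.map (blockMap (tauFrom π j (i + 1)))) := by
  have hid : μ.map (blockMap (tauFrom π j 0)) = μ := Measure.map_id
  rw [weightedEntropy, Finset.sum_range_succ', add_comm, hid]
  rfl

theorem wValGen_succ_eq_pressure_add [∀ i, DiscreteMeasurableSpace (B i)]
    (π : ∀ i, B i → B (i + 1)) (X : ∀ i, Set (ℕ → B i)) (j k : ℕ) (w : ℕ → ℝ)
    (φ : ℕ → (ℕ → B j) → ℝ) (μ : ProbabilityMeasure (ℕ → B j)) :
    wValGen π X j (k + 1) w φ μ = pressure (X j) (w 0) φ μ +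
      (weightedEntropy π X (j + 1) k (fun i => w (i + 1)) (pushPM (π j) μ : Measure _) : ℝ) := by
  rw [pressure, add_assoc, ← EReal.coe_add]
  change _ + ((weightedEntropy π X j (k + 1) w μ : ℝ) : EReal) = _
  rw [weightedEntropy_succ]
  simp only [ent_map_tauFrom_succ]
  rfl

theorem wValGen_eq_pressure_add_weightedEntropy (π : ∀ i, B i → B (i + 1))
    (X : ∀ i, Set (ℕ → B i)) (j k : ℕ) {a : ℝ} {b w : ℕ → ℝ} (hb₀ : b 0 = a + w 0)
    (hb : ∀ i, b (i + 1) = w (i + 1)) (φ : ℕ → (ℕ → B j) → ℝ)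
    (μ : ProbabilityMeasure (ℕ → B j)) :
    wValGen π X j (k + 1) b φ μ =
      pressure (X j) a φ μ + (weightedEntropy π X j (k + 1) w (μ : Measure _) : ℝ) := by
  rw [pressure, add_assoc, ← EReal.coe_add]
  change _ + ((weightedEntropy π X j (k + 1) b μ : ℝ) : EReal) = _
  simp only [weightedEntropy_succ, hb₀, hb]
  congr 2
  ring

theorem wEqSetGen_eq_argmaxOn_weightedPressure (π : ∀ i, B i → B (i + 1))
    (X : ∀ i, Set (ℕ → B i)) (j k : ℕ) (w : ℕ → ℝ) (φ : ℕ → (ℕ → B j) → ℝ) :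
    wEqSetGen π X j k w φ = argmaxOn
      (weightedPressure (tauFrom π j) (fun i => X (j + i)) (Finset.range k) w φ) (MInv (X j)) :=
  setOf_eq_biSup _ _

theorem wEqSetGen_structure [∀ i, TopologicalSpace (B i)] [∀ i, DiscreteTopology (B i)]
    [∀ i, BorelSpace (B i)] {w : ℕ → ℝ} {φ : List (B j) → ℝ} {c : ℝ} (hk : 0 < k)
    (hX : ∀ i < k, IsSubshift (X (j + i)))
    (hπ : ∀ i, i + 1 < k → Set.MapsTo (blockMap (π (j + i))) (X (j + i)) (X (j + i + 1)))
    (hw : ∀ i < k, 0 ≤ w i) (hφ : IsSubmultOn (X j) φ c) :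
    (wEqSetGen π X j k w (genPot φ)).Nonempty ∧ IsCompact (wEqSetGen π X j k w (genPot φ)) ∧
      ConvexPM (wEqSetGen π X j k w (genPot φ)) ∧
      ∀ μ, IsExtremePM (wEqSetGen π X j k w (genPot φ)) μ →
        Ergodic shiftMap (μ : Measure (ℕ → B j)) := by
  have h := isWeightedFamily_tauFrom hk hX hπ hw
  rw [wEqSetGen_eq_argmaxOn_weightedPressure]
  exact ⟨h.argmaxOn_nonempty hφ, h.isCompact_argmaxOn hφ, h.convexPM_argmaxOn hφ,
    fun _ => h.ergodic_of_isExtremePM hφ⟩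

theorem wEqSetGen_succ_eq_argmaxOn [∀ i, DiscreteMeasurableSpace (B i)]
    (π : ∀ i, B i → B (i + 1)) (X : ∀ i, Set (ℕ → B i)) (j k : ℕ) (w : ℕ → ℝ)
    (φ : ℕ → (ℕ → B j) → ℝ) :
    wEqSetGen π X j (k + 1) w φ = argmaxOn (fun μ => pressure (X j) (w 0) φ μ +
      (weightedEntropy π X (j + 1) k (fun i => w (i + 1)) (pushPM (π j) μ : Measure _) : ℝ))
      (MInv (X j)) :=
  (setOf_eq_biSup _ _).trans (congrArg (argmaxOn · _)
    (funext (wValGen_succ_eq_pressure_add π X j k w φ)))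

theorem wEqSetGen_eq_argmaxOn_pressure_add (π : ∀ i, B i → B (i + 1))
    (X : ∀ i, Set (ℕ → B i)) (j k : ℕ) {a : ℝ} {b w : ℕ → ℝ} (hb₀ : b 0 = a + w 0)
    (hb : ∀ i, b (i + 1) = w (i + 1)) (φ : ℕ → (ℕ → B j) → ℝ) :
    wEqSetGen π X j (k + 1) b φ = argmaxOn (fun μ => pressure (X j) a φ μ +
      (weightedEntropy π X j (k + 1) w (μ : Measure _) : ℝ)) (MInv (X j)) :=
  (setOf_eq_biSup _ _).trans (congrArg (argmaxOn · _)
    (funext (wValGen_eq_pressure_add_weightedEntropy π X j k hb₀ hb φ)))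

end

theorem weighted_eq_states_stmt_18_general {k : ℕ} (hk : 2 ≤ k) {B : ℕ → Type}
    [∀ i, Fintype (B i)] [∀ i, TopologicalSpace (B i)] [∀ i, DiscreteTopology (B i)]
    [∀ i, MeasurableSpace (B i)] [∀ i, BorelSpace (B i)]
    (X : ∀ i, Set (ℕ → B i)) (hX : ∀ i, 1 ≤ i → i ≤ k → IsSubshift (X i))
    (π : ∀ i, B i → B (i + 1))
    (hπ : ∀ i, 1 ≤ i → i ≤ k - 1 → Set.MapsTo (blockMap (π i)) (X i) (X (i + 1)))
    (hsurj : Set.SurjOn (blockMap (π 1)) (X 1) (X 2))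
    (a : ℕ → ℝ) (ha₁ : 0 < a 1) (ha : ∀ i, 2 ≤ i → i ≤ k → 0 ≤ a i)
    {φ : List (B 1) → ℝ} {c : ℝ} (hφ : IsSubmultOn (X 1) φ c)
    (b : ℕ → ℝ) (hb0 : b 0 = a 1 + a 2) (hbi : ∀ i, 1 ≤ i → b i = a (i + 2)) :
    ((wEqSetGen π X 1 k (fun i => a (i + 1)) (genPot φ)).Nonempty ∧
      IsCompact (wEqSetGen π X 1 k (fun i => a (i + 1)) (genPot φ)) ∧
      ConvexPM (wEqSetGen π X 1 k (fun i => a (i + 1)) (genPot φ)) ∧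
      ∀ μ : ProbabilityMeasure (ℕ → B 1),
        IsExtremePM (wEqSetGen π X 1 k (fun i => a (i + 1)) (genPot φ)) μ →
        Ergodic shiftMap (μ : Measure (ℕ → B 1))) ∧
    (∀ μ : ProbabilityMeasure (ℕ → B 1),
      μ ∈ wEqSetGen π X 1 k (fun i => a (i + 1)) (genPot φ) ↔
      ∃ ν : ProbabilityMeasure (ℕ → B 2), (ν : Measure (ℕ → B 2)) = pushM (π 1) μ ∧
        μ ∈ CondEqSet (X 1) (π 1) (scPot (a 1)⁻¹ (genPot φ)) (ν : Measure (ℕ → B 2)) ∧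
        ν ∈ wEqSetGen π X 2 (k - 1) b (genPot (phiTwo (X 1) (π 1) φ (a 1)))) ∧
    ((∃ μ : ProbabilityMeasure (ℕ → B 1),
        wEqSetGen π X 1 k (fun i => a (i + 1)) (genPot φ) = {μ}) ↔
      ∃ ν : ProbabilityMeasure (ℕ → B 2),
        wEqSetGen π X 2 (k - 1) b (genPot (phiTwo (X 1) (π 1) φ (a 1))) = {ν} ∧
        ∃! ρ : ProbabilityMeasure (ℕ → B 1),
          ρ ∈ CondEqSet (X 1) (π 1) (scPot (a 1)⁻¹ (genPot φ)) (ν : Measure (ℕ → B 2)) ∧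
            Ergodic shiftMap (ρ : Measure (ℕ → B 1))) := by
  obtain ⟨k, rfl⟩ := Nat.exists_eq_add_of_le' hk
  have hX₁ : IsSubshift (X 1) := hX 1 le_rfl (by omega)
  have hmax := isFiberMax_pressure hX₁ (hX 2 (by omega) hk) hφ ha₁ (hπ 1 le_rfl (by omega)) hsurj
  have hw : ∀ i < k + 2, 0 ≤ a (i + 1)
    | 0, _ => ha₁.le
    | i + 1, hi => ha _ (by omega) hi
  have hstructure := wEqSetGen_structure (by omega) (fun i hi => hX _ (by omega) (by omega))
    (fun i hi => hπ _ (by omega) (by omega)) hw hφ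
  let R (ν : ProbabilityMeasure (ℕ → B 2)) : ℝ :=
    weightedEntropy π X 2 (k + 1) (fun i => a (i + 2)) (ν : Measure (ℕ → B 2))
  have hI : wEqSetGen π X 1 (k + 2) (fun i => a (i + 1)) (genPot φ) = argmaxOn
      (fun μ => pressure (X 1) (a 1) (genPot φ) μ + (R (pushPM (π 1) μ) : ℝ)) (MInv (X 1)) :=
    wEqSetGen_succ_eq_argmaxOn π X 1 (k + 1) (fun i => a (i + 1)) (genPot φ)
  have hI₂ := wEqSetGen_eq_argmaxOn_pressure_add π X 2 k (w := fun i => a (i + 2)) hb0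
    (fun i => hbi (i + 1) (by omega)) (genPot (phiTwo (X 1) (π 1) φ (a 1)))
  have hC := condEqSet_scPot_eq_argmaxOn (π := π 1) hX₁ hφ ha₁
  rw [Nat.add_succ_sub_one, hI₂]
  refine ⟨hstructure, fun μ => ?_, ?_⟩
  · simp only [hC, coe_eq_pushM_iff, exists_eq_left, hI]
    exact hmax.mem_argmaxOn_add_iff (R := R)
  · obtain ⟨hne, hcompact, hconvex, herg⟩ := hstructure
    simp only [hC]
    exact hmax.exists_argmaxOn_eq_singleton_iff (R := R) hI hne hcompact hconvex herg

/-- Lemma 7.1 / `lem-t`: structure of the set of `a`-weighted equilibrium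
states for a chain of `k` subshifts: it is non-empty compact convex with ergodic extreme
points; `μ ∈ I(Φ,a)` iff `μ ∈ I_{μ∘π₁⁻¹}((1/a₁)Φ)` and `μ∘π₁⁻¹ ∈ I(Φ^{(2)},b)` with
`b = (a₁+a₂, a₃, …, a_k)`; and `I(Φ,a)` is a singleton iff `I(Φ^{(2)},b)` is a singleton
`{ν}` and `I_ν((1/a₁)Φ)` contains a unique ergodic measure. -/
theorem weighted_eq_states_stmt_18 {k : ℕ} (hk : 2 ≤ k) {B : ℕ → Type}
    [∀ i, Fintype (B i)] [∀ i, TopologicalSpace (B i)] [∀ i, DiscreteTopology (B i)]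
    [∀ i, MeasurableSpace (B i)] [∀ i, BorelSpace (B i)]
    (X : ∀ i, Set (ℕ → B i)) (hX : ∀ i, 1 ≤ i → i ≤ k → IsSubshift (X i))
    (π : ∀ i, B i → B (i+1))
    (hπ : ∀ i, 1 ≤ i → i ≤ k - 1 → blockMap (π i) '' X i = X (i+1))
    (a : ℕ → ℝ) (ha₁ : 0 < a 1) (ha : ∀ i, 2 ≤ i → i ≤ k → 0 ≤ a i)
    (p : ℕ) (φ : List (B 1) → ℝ) (hφ : Dw (X 1) p φ)
    (b : ℕ → ℝ) (hb0 : b 0 = a 1 + a 2) (hbi : ∀ i, 1 ≤ i → b i = a (i + 2)) :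
    ((wEqSetGen π X 1 k (fun i => a (i+1)) (genPot φ)).Nonempty ∧
      IsCompact (wEqSetGen π X 1 k (fun i => a (i+1)) (genPot φ)) ∧
      ConvexPM (wEqSetGen π X 1 k (fun i => a (i+1)) (genPot φ)) ∧
      ∀ μ : ProbabilityMeasure (ℕ → B 1),
        IsExtremePM (wEqSetGen π X 1 k (fun i => a (i+1)) (genPot φ)) μ →
        Ergodic shiftMap (μ : Measure (ℕ → B 1))) ∧
    (∀ μ : ProbabilityMeasure (ℕ → B 1),
      μ ∈ wEqSetGen π X 1 k (fun i => a (i+1)) (genPot φ) ↔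
      ∃ ν : ProbabilityMeasure (ℕ → B 2), (ν : Measure (ℕ → B 2)) = pushM (π 1) μ ∧
        μ ∈ CondEqSet (X 1) (π 1) (scPot (a 1)⁻¹ (genPot φ)) (ν : Measure (ℕ → B 2)) ∧
        ν ∈ wEqSetGen π X 2 (k-1) b (genPot (phiTwo (X 1) (π 1) φ (a 1)))) ∧
    ((∃ μ : ProbabilityMeasure (ℕ → B 1),
        wEqSetGen π X 1 k (fun i => a (i+1)) (genPot φ) = {μ}) ↔
      ∃ ν : ProbabilityMeasure (ℕ → B 2),
        wEqSetGen π X 2 (k-1) b (genPot (phiTwo (X 1) (π 1) φ (a 1))) = {ν} ∧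
        ∃! ρ : ProbabilityMeasure (ℕ → B 1),
          ρ ∈ CondEqSet (X 1) (π 1) (scPot (a 1)⁻¹ (genPot φ)) (ν : Measure (ℕ → B 2)) ∧
            Ergodic shiftMap (ρ : Measure (ℕ → B 1))) := by
  obtain ⟨hφ0, -, c, hc0, hc1, hsub, -⟩ := hφ
  exact weighted_eq_states_stmt_18_general hk X hX π
    (fun i h₁ h₂ => Set.mapsTo_iff_image_subset.2 (hπ i h₁ h₂).subset)
    (hπ 1 le_rfl (by omega)).superset a ha₁ ha ⟨hc0, hc1, hφ0, hsub⟩ b hb0 hbi
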